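/- arXiv:1902.07426 — 2 statements merged into one kernel-verified Lean document; each statement's English description precedes it below -/
import Mathlib

section
/- There is a universal constant C > 0 such that the following holds. Let n ≥ 16, let μ be a product probability measure on {0,1}^n, let ε ∈ (0,1/2], and let f : {0,1}^n → {0,1}. Then there exist a value b ∈ {0,1} and a set S ⊆ [n] with |S| ≤ C·( log(1/ε)·n/(ε·log n) + n·log log n/(ε·log n) ) such that I_S^b(f) ≥ 1 − ε. (In other words, no single-round Boolean coin-flipping protocol over any product measure is ε-resilient against all coalitions of this size.) -/
open MeasureTheory

/-- Influence of coalition `S` towards value `b`: the probability over `x ∼ μ` that `x` can be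
modified on the coordinates in `S` to obtain `y` with `f y = b`. -/
noncomputable def infl {ι : Type*} {α : Type*} (μ : Measure (ι → Bool))
    (f : (ι → Bool) → α) (S : Finset ι) (b : α) : ℝ :=
  (μ {x | ∃ y, (∀ j ∉ S, y j = x j) ∧ f y = b}).toReal

namespace SRB

set_option linter.unusedSectionVars false

section
variable {ι : Type} [Fintype ι] [DecidableEq ι]

noncomputable def wt (p : ι → ℝ) (c : ι → Bool) (j : ι) (a : Bool) : ℝ :=
  if a = c j then 1 - p j else p j

noncomputable def W (p : ι → ℝ) (c : ι → Bool) (x : ι → Bool) : ℝ := ∏ j, wt p c j (x j)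

noncomputable def E (p : ι → ℝ) (c : ι → Bool) (F : (ι → Bool) → ℝ) : ℝ := ∑ x, W p c x * F x

noncomputable def phi (p : ι → ℝ) (c : ι → Bool) (j : ι) (a : Bool) : ℝ :=
  if a = c j then -√(p j / (1 - p j)) else √((1 - p j) / p j)

noncomputable def Phi (p : ι → ℝ) (c : ι → Bool) (S : Finset ι) (x : ι → Bool) : ℝ :=
  ∏ j ∈ S, phi p c j (x j)

noncomputable def fh (p : ι → ℝ) (c : ι → Bool) (S : Finset ι) (f : (ι → Bool) → ℝ) : ℝ :=
  E p c (fun x => f x * Phi p c S x)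

noncomputable def B (p : ι → ℝ) (c : ι → Bool) (r : ι → ℝ) (f g : (ι → Bool) → ℝ) : ℝ :=
  ∑ S : Finset ι, (∏ j ∈ S, r j) * fh p c S f * fh p c S g

variable {p : ι → ℝ} {c : ι → Bool}

lemma sum_bool (c : Bool) (F : Bool → ℝ) : ∑ b, F b = F c + F (!c) := by
  cases c <;> simp [add_comm]

lemma wt_c (j : ι) : wt p c j (c j) = 1 - p j := by simp [wt]
lemma wt_r (j : ι) : wt p c j (!c j) = p j := by simp [wt]
lemma phi_c (j : ι) : phi p c j (c j) = -√(p j / (1 - p j)) := by simp [phi]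
lemma phi_r (j : ι) : phi p c j (!c j) = √((1 - p j) / p j) := by simp [phi]

lemma wt_sum (j : ι) : ∑ b, wt p c j b = 1 := by
  rw [sum_bool (c j), wt_c, wt_r]; ring

lemma wt_nonneg (h0 : ∀ j, 0 ≤ p j) (h1 : ∀ j, p j ≤ 1/2) (j : ι) (a : Bool) : 0 ≤ wt p c j a := by
  unfold wt; split_ifs <;> linarith [h0 j, h1 j]

lemma W_nonneg (h0 : ∀ j, 0 ≤ p j) (h1 : ∀ j, p j ≤ 1/2) (x : ι → Bool) : 0 ≤ W p c x :=
  Finset.prod_nonneg fun j _ => wt_nonneg h0 h1 j _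

lemma W_update (x : ι → Bool) (k : ι) (b : Bool) :
    W p c (Function.update x k b) * wt p c k (x k) = W p c x * wt p c k b := by
  unfold W
  rw [← Finset.mul_prod_erase Finset.univ _ (Finset.mem_univ k),
    ← Finset.mul_prod_erase Finset.univ (fun j => wt p c j (x j)) (Finset.mem_univ k)]
  have : ∏ j ∈ Finset.univ.erase k, wt p c j (Function.update x k b j)
      = ∏ j ∈ Finset.univ.erase k, wt p c j (x j) := by
    refine Finset.prod_congr rfl fun j hj => ?_
    rw [Function.update_of_ne (Finset.ne_of_mem_erase hj)]
  rw [this]; simp; ring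

lemma E_int (k : ι) (F : (ι → Bool) → ℝ) :
    E p c F = E p c (fun x => (1 - p k) * F (Function.update x k (c k))
      + p k * F (Function.update x k (!c k))) := by
  have h1 : E p c (fun x => (1 - p k) * F (Function.update x k (c k))
      + p k * F (Function.update x k (!c k)))
      = ∑ z : (ι → Bool) × Bool, W p c z.1 * wt p c k z.2 * F (Function.update z.1 k z.2) := by
    rw [Fintype.sum_prod_type]
    unfold E
    refine Finset.sum_congr rfl fun x _ => ?_
    simp only
    rw [sum_bool (c k), wt_c, wt_r]; ring
  have h2 : E p c F = ∑ z : (ι → Bool) × Bool, W p c z.1 * wt p c k z.2 * F z.1 := by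
    rw [Fintype.sum_prod_type]
    unfold E
    refine Finset.sum_congr rfl fun x _ => ?_
    simp only
    rw [← Finset.sum_mul, ← Finset.mul_sum, wt_sum]; ring
  rw [h1, h2]
  refine Finset.sum_bij' (fun z _ => (Function.update z.1 k z.2, z.1 k))
    (fun z _ => (Function.update z.1 k z.2, z.1 k)) (by simp) (by simp) ?_ ?_ ?_
  · rintro ⟨x, b⟩ _; simp
  · rintro ⟨x, b⟩ _; simp
  · rintro ⟨x, b⟩ _
    simp [W_update]

lemma E_congr {F G : (ι → Bool) → ℝ} (h : ∀ x, F x = G x) : E p c F = E p c G := by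
  rw [show F = G from funext h]

lemma E_mono (h0 : ∀ j, 0 ≤ p j) (h1 : ∀ j, p j ≤ 1/2) {F G : (ι → Bool) → ℝ}
    (h : ∀ x, F x ≤ G x) : E p c F ≤ E p c G :=
  Finset.sum_le_sum fun x _ => mul_le_mul_of_nonneg_left (h x) (W_nonneg h0 h1 x)

lemma E_nonneg (h0 : ∀ j, 0 ≤ p j) (h1 : ∀ j, p j ≤ 1/2) {F : (ι → Bool) → ℝ}
    (h : ∀ x, 0 ≤ F x) : 0 ≤ E p c F :=
  Finset.sum_nonneg fun x _ => mul_nonneg (W_nonneg h0 h1 x) (h x)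

lemma E_add (F G : (ι → Bool) → ℝ) : E p c (fun x => F x + G x) = E p c F + E p c G := by
  simp [E, mul_add, Finset.sum_add_distrib]

lemma E_smul (a : ℝ) (F : (ι → Bool) → ℝ) : E p c (fun x => a * F x) = a * E p c F := by
  simp only [E, Finset.mul_sum]
  exact Finset.sum_congr rfl fun x _ => by ring

lemma E_sum {σ : Type*} (s : Finset σ) (F : σ → (ι → Bool) → ℝ) :
    E p c (fun x => ∑ i ∈ s, F i x) = ∑ i ∈ s, E p c (F i) := by
  simp only [E, Finset.mul_sum]
  exact Finset.sum_comm

lemma E_one : E p c (fun _ => (1:ℝ)) = 1 := by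
  simp only [E, W, mul_one]
  rw [← Fintype.prod_sum]
  exact Finset.prod_eq_one fun j _ => wt_sum j

lemma E_cs (h0 : ∀ j, 0 ≤ p j) (h1 : ∀ j, p j ≤ 1/2) (F G : (ι → Bool) → ℝ) :
    (E p c (fun x => F x * G x)) ^ 2 ≤ E p c (fun x => F x ^ 2) * E p c (fun x => G x ^ 2) := by
  unfold E
  refine Finset.sum_sq_le_sum_mul_sum_of_sq_le_mul _ ?_ ?_ ?_
  · intro x _; exact mul_nonneg (W_nonneg h0 h1 x) (sq_nonneg _)
  · intro x _; exact mul_nonneg (W_nonneg h0 h1 x) (sq_nonneg _)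
  · intro x _; exact le_of_eq (by ring)

lemma phi_mean (h0 : ∀ j, 0 ≤ p j) (h1 : ∀ j, p j ≤ 1/2) (j : ι) :
    (1 - p j) * phi p c j (c j) = - √(p j * (1 - p j)) ∧
    p j * phi p c j (!c j) = √(p j * (1 - p j)) := by
  rw [phi_c, phi_r]
  have hq : 0 < 1 - p j := by linarith [h1 j]
  rcases (h0 j).eq_or_lt with h | h
  · simp [← h]
  constructor
  · rw [Real.sqrt_div h.le, Real.sqrt_mul h.le]
    have := Real.mul_self_sqrt hq.le
    have h3 : √(1 - p j) ≠ 0 := (Real.sqrt_pos.2 hq).ne'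
    field_simp
    nlinarith
  · rw [Real.sqrt_div hq.le, Real.sqrt_mul h.le]
    have := Real.mul_self_sqrt h.le
    have h3 : √(p j) ≠ 0 := (Real.sqrt_pos.2 h).ne'
    field_simp
    nlinarith

/-- kernel identity at r = 1 -/
lemma ker_one (h0 : ∀ j, 0 ≤ p j) (h1 : ∀ j, p j ≤ 1/2) (j : ι) (a b : Bool) :
    wt p c j a * wt p c j b * (1 + phi p c j a * phi p c j b) = if a = b then wt p c j a else 0 := by
  have hq : 0 < 1 - p j := by linarith [h1 j]
  have hA : √(p j / (1 - p j)) * √(p j / (1 - p j)) = p j / (1 - p j) :=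
    Real.mul_self_sqrt (div_nonneg (h0 j) hq.le)
  have hB : √((1 - p j) / p j) * √((1 - p j) / p j) = (1 - p j) / p j :=
    Real.mul_self_sqrt (div_nonneg hq.le (h0 j))
  rcases (h0 j).eq_or_lt with h | h
  · simp only [wt, phi, ← h]
    by_cases ha : a = c j <;> by_cases hb : b = c j <;> simp [ha, hb]
    intro h; exact absurd h.symm hb
  · have hC : √(p j / (1 - p j)) * √((1 - p j) / p j) = 1 := by
      rw [← Real.sqrt_mul (div_nonneg (h0 j) hq.le)]
      rw [show p j / (1 - p j) * ((1 - p j) / p j) = 1 by field_simp]; simp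
    by_cases ha : a = c j <;> by_cases hb : b = c j
    · subst ha; subst hb
      simp only [wt_c, phi_c, if_true]
      rw [neg_mul_neg, hA]; field_simp; ring
    · have hb' : b = !c j := by cases b <;> cases hh : c j <;> simp_all
      subst ha; subst hb'
      simp only [wt_c, phi_c, phi_r]
      rw [neg_mul, hC]; simp
    · have ha' : a = !c j := by cases a <;> cases hh : c j <;> simp_all
      subst ha'; subst hb
      simp only [wt_c, phi_c, phi_r]
      rw [mul_neg, mul_comm (√((1 - p j) / p j)), hC]; simp
    · have ha' : a = !c j := by cases a <;> cases hh : c j <;> simp_all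
      have hb' : b = !c j := by cases b <;> cases hh : c j <;> simp_all
      subst ha'; subst hb'
      simp only [wt_r, phi_r, if_true]
      rw [hB]; field_simp; ring

lemma ker_nonneg (h0 : ∀ j, 0 ≤ p j) (h1 : ∀ j, p j ≤ 1/2) (j : ι) (a b : Bool) (r : ℝ)
    (hr0 : 0 ≤ r) (hr1 : r ≤ 1) :
    0 ≤ wt p c j a * wt p c j b * (1 + r * (phi p c j a * phi p c j b)) := by
  have hk := ker_one h0 h1 j a b (c := c)
  have hw := mul_nonneg (wt_nonneg h0 h1 j a (c := c)) (wt_nonneg h0 h1 j b (c := c))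
  have h3 : 0 ≤ wt p c j a * wt p c j b * (1 + phi p c j a * phi p c j b) := by
    rw [hk]; split_ifs; exacts [wt_nonneg h0 h1 j a, le_rfl]
  nlinarith [mul_nonneg hr0 h3, mul_nonneg (sub_nonneg.2 hr1) hw]

lemma B_ker (r : ι → ℝ) (f g : (ι → Bool) → ℝ) :
    B p c r f g = ∑ x, ∑ y, (∏ j, (wt p c j (x j) * wt p c j (y j) *
      (1 + r j * (phi p c j (x j) * phi p c j (y j))))) * f x * g y := by
  have hx : ∀ x y : ι → Bool, (∏ j, (wt p c j (x j) * wt p c j (y j) *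
      (1 + r j * (phi p c j (x j) * phi p c j (y j))))) * f x * g y
      = ∑ S : Finset ι, (∏ j ∈ S, r j) * (W p c x * (f x * Phi p c S x)) *
        (W p c y * (g y * Phi p c S y)) := by
    intro x y
    rw [Finset.prod_mul_distrib, Finset.prod_mul_distrib, Finset.prod_one_add, Finset.powerset_univ,
      Finset.mul_sum, Finset.sum_mul, Finset.sum_mul]
    refine Finset.sum_congr rfl fun S _ => ?_
    rw [Finset.prod_mul_distrib, Finset.prod_mul_distrib]
    unfold W Phi; ring
  simp_rw [hx]
  unfold B fh E
  simp_rw [Finset.mul_sum, Finset.sum_mul]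
  have : ∀ F : Finset ι → (ι → Bool) → (ι → Bool) → ℝ,
     ∑ x, ∑ y, ∑ S, F S x y = ∑ S, ∑ y, ∑ x, F S x y := by
    intro F
    calc _ = ∑ x, ∑ S, ∑ y, F S x y := Finset.sum_congr rfl fun x _ => Finset.sum_comm
      _ = ∑ S, ∑ x, ∑ y, F S x y := Finset.sum_comm
      _ = _ := Finset.sum_congr rfl fun S _ => Finset.sum_comm
  rw [this]

lemma B_nonneg (h0 : ∀ j, 0 ≤ p j) (h1 : ∀ j, p j ≤ 1/2) {r : ι → ℝ}
    (hr0 : ∀ j, 0 ≤ r j) (hr1 : ∀ j, r j ≤ 1) {f g : (ι → Bool) → ℝ}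
    (hf : ∀ x, 0 ≤ f x) (hg : ∀ x, 0 ≤ g x) : 0 ≤ B p c r f g := by
  rw [B_ker]
  exact Finset.sum_nonneg fun x _ => Finset.sum_nonneg fun y _ =>
    mul_nonneg (mul_nonneg (Finset.prod_nonneg fun j _ =>
      ker_nonneg h0 h1 j _ _ _ (hr0 j) (hr1 j)) (hf x)) (hg y)

lemma B_one (h0 : ∀ j, 0 ≤ p j) (h1 : ∀ j, p j ≤ 1/2) (f g : (ι → Bool) → ℝ) :
    B p c (fun _ => 1) f g = E p c (fun x => f x * g x) := by
  rw [B_ker]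
  unfold E
  refine Finset.sum_congr rfl fun x _ => ?_
  rw [Finset.sum_eq_single x]
  · simp only [one_mul, ker_one h0 h1, if_true]
    unfold W; ring
  · intro y _ hy
    obtain ⟨j, hj⟩ := Function.ne_iff.1 hy
    rw [Finset.prod_eq_zero (Finset.mem_univ j)]
    · ring
    · rw [one_mul, ker_one h0 h1, if_neg (Ne.symm hj)]
  · simp

lemma B_zero (f g : (ι → Bool) → ℝ) :
    B p c (fun _ => 0) f g = E p c f * E p c g := by
  unfold B
  rw [Finset.sum_eq_single ∅]
  · simp [fh, Phi]
  · intro S _ hS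
    obtain ⟨j, hj⟩ := Finset.nonempty_iff_ne_empty.2 hS
    rw [Finset.prod_eq_zero hj rfl]; ring
  · simp

lemma fh_sub (S : Finset ι) (f g : (ι → Bool) → ℝ) :
    fh p c S (fun x => f x - g x) = fh p c S f - fh p c S g := by
  simp only [fh, E, ← Finset.sum_sub_distrib]
  exact Finset.sum_congr rfl fun x _ => by ring

lemma B_sub_sub (r : ι → ℝ) (f g f' g' : (ι → Bool) → ℝ) :
    B p c r (fun x => f x - g x) (fun x => f' x - g' x)
      = B p c r f f' - B p c r f g' - B p c r g f' + B p c r g g' := by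
  simp only [B, fh_sub, ← Finset.sum_sub_distrib, ← Finset.sum_add_distrib]
  exact Finset.sum_congr rfl fun x _ => by ring

lemma B_cs {r : ι → ℝ} (hr0 : ∀ j, 0 ≤ r j) (f g : (ι → Bool) → ℝ) :
    (B p c r f g) ^ 2 ≤ B p c r f f * B p c r g g := by
  unfold B
  have hp : ∀ S : Finset ι, 0 ≤ ∏ j ∈ S, r j := fun S => Finset.prod_nonneg fun j _ => hr0 j
  refine Finset.sum_sq_le_sum_mul_sum_of_sq_le_mul _ ?_ ?_ ?_
  · intro S _; rw [mul_assoc]; exact mul_nonneg (hp S) (mul_self_nonneg _)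
  · intro S _; rw [mul_assoc]; exact mul_nonneg (hp S) (mul_self_nonneg _)
  · intro S _; exact le_of_eq (by ring)

lemma B_self_nonneg {r : ι → ℝ} (hr0 : ∀ j, 0 ≤ r j) (f : (ι → Bool) → ℝ) :
    0 ≤ B p c r f f := 
  Finset.sum_nonneg fun S _ => by
    rw [mul_assoc]; exact mul_nonneg (Finset.prod_nonneg fun j _ => hr0 j) (mul_self_nonneg _)

lemma B_self_mono {r r' : ι → ℝ} (hr0 : ∀ j, 0 ≤ r j) (hr : ∀ j, r j ≤ r' j)
    (f : (ι → Bool) → ℝ) : B p c r f f ≤ B p c r' f f := by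
  refine Finset.sum_le_sum fun S _ => ?_
  rw [mul_assoc, mul_assoc]
  exact mul_le_mul_of_nonneg_right (Finset.prod_le_prod (fun j _ => hr0 j) fun j _ => hr j)
    (mul_self_nonneg _)

lemma B_half {r r' : ι → ℝ} (hr : ∀ j, r' j = r j ^ 2)
    (f : (ι → Bool) → ℝ) :
    (B p c r f f) ^ 2 ≤ B p c (fun _ => 1) f f * B p c r' f f := by
  unfold B
  refine Finset.sum_sq_le_sum_mul_sum_of_sq_le_mul _ ?_ ?_ ?_
  · intro S _; simp; exact mul_self_nonneg _
  · intro S _; rw [mul_assoc]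
    exact mul_nonneg (Finset.prod_nonneg fun j _ => by rw [hr]; positivity) (mul_self_nonneg _)
  · intro S _; simp_rw [hr, Finset.prod_pow]; simp only [Finset.prod_const_one]; exact le_of_eq (by ring)

end

section
variable {ι : Type} [Fintype ι] [DecidableEq ι] {p : ι → ℝ} {c : ι → Bool}

/-- discrete derivative -/
noncomputable def dd (c : ι → Bool) (k : ι) (f : (ι → Bool) → ℝ) (x : ι → Bool) : ℝ :=
  f (Function.update x k (!c k)) - f (Function.update x k (c k))

lemma Phi_update_notMem {S : Finset ι} {k : ι} (hk : k ∉ S) (x : ι → Bool) (b : Bool) :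
    Phi p c S (Function.update x k b) = Phi p c S x := by
  unfold Phi
  refine Finset.prod_congr rfl fun j hj => ?_
  rw [Function.update_of_ne]
  rintro rfl; exact hk hj

lemma Phi_insert {S : Finset ι} {k : ι} (hk : k ∉ S) (x : ι → Bool) :
    Phi p c (insert k S) x = phi p c k (x k) * Phi p c S x := by
  unfold Phi
  rw [Finset.prod_insert hk]

lemma dd_update (k : ι) (f : (ι → Bool) → ℝ) (x : ι → Bool) (b : Bool) :
    dd c k f (Function.update x k b) = dd c k f x := by
  simp [dd]

lemma fh_dd_insert (h0 : ∀ j, 0 ≤ p j) (h1 : ∀ j, p j ≤ 1/2) {S : Finset ι} {k : ι} (hk : k ∉ S)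
    (f : (ι → Bool) → ℝ) : fh p c (insert k S) (dd c k f) = 0 := by
  unfold fh
  rw [E_int k]
  obtain ⟨ha, hb⟩ := phi_mean h0 h1 k (c := c)
  have : ∀ x : ι → Bool, (1 - p k) * (dd c k f (Function.update x k (c k)) *
        Phi p c (insert k S) (Function.update x k (c k))) +
      p k * (dd c k f (Function.update x k !c k) * Phi p c (insert k S) (Function.update x k !c k))
       = 0 * 0 := by
    intro x
    rw [dd_update, dd_update, Phi_insert hk, Phi_insert hk, Phi_update_notMem hk,
      Phi_update_notMem hk, Function.update_self, Function.update_self]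
    linear_combination (dd c k f x * Phi p c S x) * (ha + hb)
  rw [E_congr this, E_smul]; ring

lemma fh_insert (h0 : ∀ j, 0 ≤ p j) (h1 : ∀ j, p j ≤ 1/2) {S : Finset ι} {k : ι} (hk : k ∉ S)
    (f : (ι → Bool) → ℝ) :
    fh p c (insert k S) f = √(p k * (1 - p k)) * fh p c S (dd c k f) := by
  unfold fh
  rw [E_int k, ← E_smul]
  obtain ⟨ha, hb⟩ := phi_mean h0 h1 k (c := c)
  refine E_congr fun x => ?_
  rw [Phi_insert hk, Phi_insert hk, Phi_update_notMem hk,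
      Phi_update_notMem hk, Function.update_self, Function.update_self]
  unfold dd
  linear_combination (f (Function.update x k (c k)) * Phi p c S x) * ha
    + (f (Function.update x k (!c k)) * Phi p c S x) * hb

lemma sum_split (k : ι) (F : Finset ι → ℝ) :
    ∑ S : Finset ι, F S = ∑ S ∈ (Finset.univ.erase k).powerset, (F S + F (insert k S)) := by
  rw [← Finset.powerset_univ, ← Finset.insert_erase (Finset.mem_univ k),
    Finset.sum_powerset_insert (Finset.notMem_erase _ _), Finset.sum_add_distrib]
  simp

lemma B_diff (h0 : ∀ j, 0 ≤ p j) (h1 : ∀ j, p j ≤ 1/2) {r r' : ι → ℝ} (k : ι)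
    (hr : ∀ j, j ≠ k → r j = r' j) (f g : (ι → Bool) → ℝ) :
    B p c r f g - B p c r' f g
      = (r k - r' k) * (p k * (1 - p k)) * B p c r (dd c k f) (dd c k g) := by
  unfold B
  rw [sum_split k, sum_split k, sum_split k, ← Finset.sum_sub_distrib, Finset.mul_sum]
  refine Finset.sum_congr rfl fun S hS => ?_
  have hk : k ∉ S := fun h => by simpa using (Finset.mem_powerset.1 hS) h
  have hS' : ∏ j ∈ S, r' j = ∏ j ∈ S, r j :=
    Finset.prod_congr rfl fun j hj => (hr j (by rintro rfl; exact hk hj)).symm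
  rw [fh_insert h0 h1 hk, fh_insert h0 h1 hk, fh_dd_insert h0 h1 hk, Finset.prod_insert hk,
    Finset.prod_insert hk, hS']
  have : √(p k * (1 - p k)) * √(p k * (1 - p k)) = p k * (1 - p k) :=
    Real.mul_self_sqrt (mul_nonneg (h0 k) (by linarith [h1 k]))
  linear_combination ((r k - r' k) * (∏ j ∈ S, r j) * fh p c S (dd c k f) * fh p c S (dd c k g)) * this

lemma two_point (h0 : ∀ j, 0 ≤ p j) (h1 : ∀ j, p j ≤ 1/2) (k : ι) (r A D : ℝ)
    (hr : r ^ 4 = p k / 16) :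
    (1 - p k) * (A + r * phi p c k (c k) * D) ^ 4 + p k * (A + r * phi p c k (!c k) * D) ^ 4
      ≤ A ^ 4 + 2 * (A ^ 2 * D ^ 2) + D ^ 4 := by
  obtain ⟨ha, hb⟩ := phi_mean h0 h1 k (c := c)
  have hq : 0 < 1 - p k := by linarith [h1 k]
  have hr2 : r ^ 2 ≤ 1 / 4 := by
    have : r ^ 4 ≤ (1/4:ℝ) ^ 2 := by rw [hr]; linarith [h1 k]
    nlinarith [sq_nonneg r]
  have hA : phi p c k (c k) ^ 2 = p k / (1 - p k) := by
    rw [phi_c, neg_sq, Real.sq_sqrt (div_nonneg (h0 k) hq.le)]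
  have hB : phi p c k (!c k) ^ 2 = (1 - p k) / p k := by
    rw [phi_r, Real.sq_sqrt (div_nonneg hq.le (h0 k))]
  set s := phi p c k (c k)
  set t := phi p c k (!c k)
  have h4 : ∀ φ : ℝ, (A + r * φ * D) ^ 4 ≤
      A ^ 4 + 4 * r * φ * A ^ 3 * D + 8 * (r ^ 2 * φ ^ 2) * (A ^ 2 * D ^ 2)
        + 3 * (r ^ 4 * φ ^ 4 * D ^ 4) := by
    intro φ
    nlinarith [sq_nonneg (r * φ * A * D - (r * φ * D) ^ 2)]
  have m2 : (1 - p k) * s ^ 2 + p k * t ^ 2 ≤ 1 := by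
    rw [hA, hB]
    rcases (h0 k).eq_or_lt with h | h
    · simp [← h]
    · apply le_of_eq; field_simp; ring
  have m4 : r ^ 4 * ((1 - p k) * s ^ 4 + p k * t ^ 4) ≤ 1 / 3 := by
    rw [show s ^ 4 = (s ^ 2) ^ 2 by ring, show t ^ 4 = (t ^ 2) ^ 2 by ring, hA, hB, hr]
    rcases (h0 k).eq_or_lt with h | h
    · simp [← h]
    · have e : p k / 16 * ((1 - p k) * (p k / (1 - p k)) ^ 2 + p k * ((1 - p k) / p k) ^ 2)
        = (p k ^ 2 * (p k / (1 - p k)) + (1 - p k) ^ 2) / 16 := by field_simp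
      have e2 : p k / (1 - p k) ≤ 1 := by rw [div_le_one hq]; linarith [h1 k]
      have e3 : 0 ≤ p k / (1 - p k) := by positivity
      have e4 : p k ^ 2 ≤ 1 := by nlinarith [h1 k]
      have e5 : (1 - p k) ^ 2 ≤ 1 := by nlinarith [h1 k]
      rw [e]
      nlinarith [mul_le_mul e4 e2 e3 zero_le_one]
  have i1 := mul_le_mul_of_nonneg_left (h4 s) hq.le
  have i2 := mul_le_mul_of_nonneg_left (h4 t) (h0 k)
  have hAD : 0 ≤ A ^ 2 * D ^ 2 := by positivity
  have hD : 0 ≤ D ^ 4 := by positivity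
  have j1 : r ^ 2 * ((1 - p k) * s ^ 2 + p k * t ^ 2) ≤ 1 / 4 := by
    nlinarith [sq_nonneg r]
  have j2 := mul_le_mul_of_nonneg_right j1 hAD
  have j3 := mul_le_mul_of_nonneg_right m4 hD
  have j4 : (1 - p k) * (4 * r * s * A ^ 3 * D) + p k * (4 * r * t * A ^ 3 * D) = 0 := by
    linear_combination (4 * r * A ^ 3 * D) * (ha + hb)
  nlinarith

lemma hyper (h0 : ∀ j, 0 ≤ p j) (h1 : ∀ j, p j ≤ 1/2) {r : ι → ℝ}
    (hr : ∀ j, r j ^ 4 = p j / 16) (s : Finset ι) : ∀ (a : Finset ι → ℝ),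
    E p c (fun x => (∑ S ∈ s.powerset, (∏ j ∈ S, r j) * a S * Phi p c S x) ^ 4)
      ≤ (∑ S ∈ s.powerset, a S ^ 2) ^ 2 := by
  induction s using Finset.induction_on with
  | empty =>
    intro a
    simp only [Finset.powerset_empty, Finset.sum_singleton, Finset.prod_empty, Phi]
    rw [E_congr (G := fun x => a ∅ ^ 4 * 1) (fun x => by ring), E_smul, E_one]
    apply le_of_eq; ring
  | insert k s hk ih =>
    intro a
    set A : (ι → Bool) → ℝ := fun x => ∑ S ∈ s.powerset, (∏ j ∈ S, r j) * a S * Phi p c S x with hA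
    set D : (ι → Bool) → ℝ := fun x => ∑ S ∈ s.powerset, (∏ j ∈ S, r j) * a (insert k S) * Phi p c S x with hD
    have hmem : ∀ S ∈ s.powerset, k ∉ S := fun S hS h => hk (Finset.mem_powerset.1 hS h)
    have hAu : ∀ x b, A (Function.update x k b) = A x := by
      intro x b
      refine Finset.sum_congr rfl fun S hS => ?_
      rw [Phi_update_notMem (hmem S hS)]
    have hDu : ∀ x b, D (Function.update x k b) = D x := by
      intro x b
      refine Finset.sum_congr rfl fun S hS => ?_
      rw [Phi_update_notMem (hmem S hS)]
    have hF : ∀ x, ∑ S ∈ (insert k s).powerset, (∏ j ∈ S, r j) * a S * Phi p c S x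
        = A x + r k * phi p c k (x k) * D x := by
      intro x
      rw [Finset.sum_powerset_insert hk, hA, hD]
      simp only
      rw [Finset.mul_sum]
      congr 1
      refine Finset.sum_congr rfl fun S hS => ?_
      rw [Finset.prod_insert (hmem S hS), Phi_insert (hmem S hS)]; ring
    simp_rw [hF]
    rw [E_int k]
    simp_rw [hAu, hDu, Function.update_self]
    have iA := ih a
    have iD := ih (fun S => a (insert k S))
    set α := ∑ S ∈ s.powerset, a S ^ 2
    set β := ∑ S ∈ s.powerset, a (insert k S) ^ 2
    have hα : 0 ≤ α := Finset.sum_nonneg fun S _ => sq_nonneg _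
    have hβ : 0 ≤ β := Finset.sum_nonneg fun S _ => sq_nonneg _
    rw [Finset.sum_powerset_insert hk]
    have key : E p c (fun x => A x ^ 2 * D x ^ 2) ≤ α * β := by
      have cs := E_cs h0 h1 (fun x => A x ^ 2) (fun x => D x ^ 2) (c := c)
      rw [E_congr (F := fun x => (A x ^ 2) ^ 2) (G := fun x => A x ^ 4) (fun x => by ring),
        E_congr (F := fun x => (D x ^ 2) ^ 2) (G := fun x => D x ^ 4) (fun x => by ring)] at cs
      have hD4 : 0 ≤ E p c (fun x => D x ^ 4) := E_nonneg h0 h1 fun x => by positivity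
      refine le_of_sq_le_sq ?_ (by positivity)
      calc _ ≤ _ := cs
        _ ≤ α ^ 2 * β ^ 2 := mul_le_mul iA iD hD4 (by positivity)
        _ = _ := by ring
    calc _ ≤ E p c (fun x => (A x ^ 4 + 2 * (A x ^ 2 * D x ^ 2)) + D x ^ 4) :=
          E_mono h0 h1 fun x => two_point h0 h1 k (r k) (A x) (D x) (hr k)
      _ = E p c (fun x => A x ^ 4) + 2 * E p c (fun x => A x ^ 2 * D x ^ 2)
            + E p c (fun x => D x ^ 4) := by rw [E_add, E_add, E_smul]
      _ ≤ α ^ 2 + 2 * (α * β) + β ^ 2 := by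
          have : E p c (fun x => A x ^ 4) ≤ α ^ 2 := iA
          have : E p c (fun x => D x ^ 4) ≤ β ^ 2 := iD
          linarith
      _ = _ := by ring

lemma small_set (h0 : ∀ j, 0 ≤ p j) (h1 : ∀ j, p j ≤ 1/2) {r : ι → ℝ}
    (hr : ∀ j, r j ^ 4 = p j / 16) (u : (ι → Bool) → ℝ) (hu : ∀ x, u x ^ 2 = u x) :
    B p c (fun j => r j ^ 2) u u ^ 2 ≤ E p c u ^ 3 := by
  set Q := B p c (fun j => r j ^ 2) u u with hQ
  have hu0 : ∀ x, 0 ≤ u x := fun x => by rw [← hu]; positivity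
  set F : (ι → Bool) → ℝ := fun x => ∑ S ∈ (Finset.univ : Finset ι).powerset,
    (∏ j ∈ S, r j) * ((∏ j ∈ S, r j) * fh p c S u) * Phi p c S x with hF
  have e1 : Q = E p c (fun x => u x * F x) := by
    rw [hF]
    simp_rw [Finset.mul_sum]
    rw [E_sum, hQ, B, Finset.powerset_univ]
    refine Finset.sum_congr rfl fun S _ => ?_
    rw [E_congr (G := fun x => ((∏ j ∈ S, r j) * ((∏ j ∈ S, r j) * fh p c S u)) * (u x * Phi p c S x))
      (fun x => by ring), E_smul, Finset.prod_pow]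
    change _ = _ * fh p c S u
    ring
  have e2 : E p c (fun x => F x ^ 4) ≤ Q ^ 2 := by
    refine (hyper h0 h1 hr Finset.univ _).trans (le_of_eq ?_)
    rw [hQ, B, Finset.powerset_univ]
    congr 1
    refine Finset.sum_congr rfl fun S _ => ?_
    rw [Finset.prod_pow]; ring
  have hμ : 0 ≤ E p c u := E_nonneg h0 h1 hu0
  have c1 := E_cs h0 h1 u (fun x => u x * F x) (c := c)
  rw [E_congr (F := fun x => u x * (u x * F x)) (G := fun x => u x * F x)
      (fun x => by rw [← mul_assoc, ← sq, hu]),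
    E_congr (F := fun x => u x ^ 2) hu, ← e1,
    E_congr (F := fun x => (u x * F x) ^ 2) (G := fun x => u x * F x ^ 2)
      (fun x => by rw [mul_pow, hu])] at c1
  have c2 := E_cs h0 h1 u (fun x => F x ^ 2) (c := c)
  rw [E_congr (F := fun x => u x ^ 2) hu,
    E_congr (F := fun x => (F x ^ 2) ^ 2) (G := fun x => F x ^ 4) (fun x => by ring)] at c2
  set m := E p c u
  set V := E p c (fun x => u x * F x ^ 2)
  have hV : 0 ≤ V := E_nonneg h0 h1 fun x => mul_nonneg (hu0 x) (sq_nonneg _)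
  have c3 : V ^ 2 ≤ m * Q ^ 2 := c2.trans (mul_le_mul_of_nonneg_left e2 hμ)
  have c4 : (Q ^ 2) ^ 2 ≤ (m * V) ^ 2 := by gcongr
  have c5 : Q ^ 2 * Q ^ 2 ≤ m ^ 3 * Q ^ 2 := by
    calc _ = (Q ^ 2) ^ 2 := by ring
      _ ≤ m ^ 2 * V ^ 2 := by rw [← mul_pow]; exact c4
      _ ≤ m ^ 2 * (m * Q ^ 2) := by gcongr
      _ = _ := by ring
  rcases (sq_nonneg Q).eq_or_lt with h | h
  · rw [← h]; positivity
  · exact le_of_mul_le_mul_right c5 h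

/-- coordinates where the common value gives 1 and the rare one gives 0 -/
noncomputable def Nf (c : ι → Bool) (k : ι) (f : (ι → Bool) → ℝ) (x : ι → Bool) : ℝ :=
  f (Function.update x k (c k)) * (1 - f (Function.update x k (!c k)))

noncomputable def Pf (c : ι → Bool) (k : ι) (f : (ι → Bool) → ℝ) (x : ι → Bool) : ℝ :=
  f (Function.update x k (!c k)) * (1 - f (Function.update x k (c k)))

lemma dd_eq (k : ι) (f : (ι → Bool) → ℝ) :
    dd c k f = fun x => Pf c k f x - Nf c k f x := by
  funext x; unfold dd Pf Nf; ring

lemma ind01 {f : (ι → Bool) → ℝ} (hf : ∀ x, f x ^ 2 = f x) (x : ι → Bool) : 0 ≤ f x ∧ f x ≤ 1 := by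
  constructor <;> nlinarith [hf x]

lemma Nf_sq {f : (ι → Bool) → ℝ} (hf : ∀ x, f x ^ 2 = f x) (k : ι) (x : ι → Bool) :
    Nf c k f x ^ 2 = Nf c k f x := by
  unfold Nf
  have h1 := hf (Function.update x k (c k))
  have h2 := hf (Function.update x k (!c k))
  rw [mul_pow, sub_sq, h1, h2]; ring

lemma Pf_sq {f : (ι → Bool) → ℝ} (hf : ∀ x, f x ^ 2 = f x) (k : ι) (x : ι → Bool) :
    Pf c k f x ^ 2 = Pf c k f x := by
  unfold Pf
  have h1 := hf (Function.update x k (c k))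
  have h2 := hf (Function.update x k (!c k))
  rw [mul_pow, sub_sq, h1, h2]; ring

lemma B_dd_bound (h0 : ∀ j, 0 ≤ p j) (h1 : ∀ j, p j ≤ 1/2) {r ρ : ι → ℝ}
    (hr0 : ∀ j, 0 ≤ r j) (hrρ : ∀ j, r j ≤ ρ j) (hρ : ∀ j, ρ j ≤ 1) (k : ι)
    {f g : (ι → Bool) → ℝ} (hf : ∀ x, f x ^ 2 = f x) (hg : ∀ x, g x ^ 2 = g x)
    {M : ℝ} (hM : 0 ≤ M)
    (b1 : B p c ρ (Nf c k f) (Nf c k f) * B p c ρ (Pf c k g) (Pf c k g) ≤ M ^ 2)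
    (b2 : B p c ρ (Nf c k g) (Nf c k g) * B p c ρ (Pf c k f) (Pf c k f) ≤ M ^ 2) :
    - B p c r (dd c k f) (dd c k g) ≤ 2 * M := by
  rw [dd_eq, dd_eq, B_sub_sub]
  have hr1 : ∀ j, r j ≤ 1 := fun j => (hrρ j).trans (hρ j)
  have hρ0 : ∀ j, 0 ≤ ρ j := fun j => (hr0 j).trans (hrρ j)
  have q1 : 0 ≤ B p c r (Pf c k f) (Pf c k g) := B_nonneg h0 h1 hr0 hr1
    (fun x => (ind01 (Pf_sq hf k) x).1) (fun x => (ind01 (Pf_sq hg k) x).1)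
  have q2 : 0 ≤ B p c r (Nf c k f) (Nf c k g) := B_nonneg h0 h1 hr0 hr1
    (fun x => (ind01 (Nf_sq hf k) x).1) (fun x => (ind01 (Nf_sq hg k) x).1)
  have gen : ∀ u v : (ι → Bool) → ℝ, B p c ρ u u * B p c ρ v v ≤ M ^ 2 → B p c r u v ≤ M := by
    intro u v h
    refine le_of_sq_le_sq ?_ hM
    calc _ ≤ _ := B_cs hr0 u v
      _ ≤ B p c ρ u u * B p c ρ v v := mul_le_mul (B_self_mono hr0 hrρ u) (B_self_mono hr0 hrρ v)
          (B_self_nonneg hr0 v) (B_self_nonneg hρ0 u)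
      _ ≤ _ := h
  have g1 := gen _ _ b1
  have g2 := gen _ _ (by rw [mul_comm]; exact b2 : B p c ρ (Pf c k f) (Pf c k f) * B p c ρ (Nf c k g) (Nf c k g) ≤ M ^ 2)
  linarith

lemma B_tele (h0 : ∀ j, 0 ≤ p j) (h1 : ∀ j, p j ≤ 1/2) {r ρ : ι → ℝ}
    (hr0 : ∀ j, 0 ≤ r j) (hrρ : ∀ j, r j ≤ ρ j) (hρ : ∀ j, ρ j ≤ 1)
    {f g : (ι → Bool) → ℝ} (hf : ∀ x, f x ^ 2 = f x) (hg : ∀ x, g x ^ 2 = g x)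
    {M : ι → ℝ} (hM : ∀ k, 0 ≤ M k)
    (b1 : ∀ k, B p c ρ (Nf c k f) (Nf c k f) * B p c ρ (Pf c k g) (Pf c k g) ≤ M k ^ 2)
    (b2 : ∀ k, B p c ρ (Nf c k g) (Nf c k g) * B p c ρ (Pf c k f) (Pf c k f) ≤ M k ^ 2) :
    B p c r f g - B p c ρ f g ≤ ∑ k, (ρ k - r k) * (p k * (2 * M k)) := by
  have main : ∀ s : Finset ι, B p c (fun j => if j ∈ s then r j else ρ j) f g - B p c ρ f g
      ≤ ∑ k ∈ s, (ρ k - r k) * (p k * (2 * M k)) := by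
    intro s
    induction s using Finset.induction_on with
    | empty => simp
    | insert k s hk ih =>
      rw [Finset.sum_insert hk]
      have d := B_diff h0 h1 (c := c) (r := fun j => if j ∈ s then r j else ρ j)
        (r' := fun j => if j ∈ insert k s then r j else ρ j) k
        (fun j hj => by simp [hj]) f g
      have e := B_dd_bound h0 h1 (c := c) (r := fun j => if j ∈ s then r j else ρ j) (ρ := ρ)
        (fun j => by split_ifs; exacts [hr0 j, (hr0 j).trans (hrρ j)])
        (fun j => by split_ifs; exacts [hrρ j, le_rfl]) hρ k hf hg (hM k) (b1 k) (b2 k)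
      simp only [hk, if_false, Finset.mem_insert_self, if_true] at d
      have hc : 0 ≤ (ρ k - r k) * (p k * (1 - p k)) :=
        mul_nonneg (sub_nonneg.2 (hrρ k)) (mul_nonneg (h0 k) (by linarith [h1 k]))
      have e' := mul_le_mul_of_nonneg_left e hc
      have hc2 : (ρ k - r k) * (p k * (1 - p k)) * (2 * M k) ≤ (ρ k - r k) * (p k * (2 * M k)) := by
        have : 0 ≤ (ρ k - r k) * (p k * p k) * (2 * M k) :=
          mul_nonneg (mul_nonneg (sub_nonneg.2 (hrρ k)) (mul_self_nonneg _)) (by linarith [hM k])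
        nlinarith
      linarith
  have := main Finset.univ
  simpa using this

end

section
variable {ι : Type} [Fintype ι] [DecidableEq ι] {p : ι → ℝ} {c : ι → Bool}

noncomputable def zz (p : ι → ℝ) (k : ι) : ℝ := p k ^ (1/4:ℝ) / 2

noncomputable def RR (p : ι → ℝ) (j : ℕ) (k : ι) : ℝ := (zz p k ^ 2) ^ ((1/2:ℝ)^j)

lemma zz_nonneg (h0 : ∀ j, 0 ≤ p j) (k : ι) : 0 ≤ zz p k := by
  have := Real.rpow_nonneg (h0 k) (1/4:ℝ)
  unfold zz; positivity

lemma zz_le (h0 : ∀ j, 0 ≤ p j) (h1 : ∀ j, p j ≤ 1/2) (k : ι) : zz p k ≤ 1 / 2 := by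
  have := Real.rpow_le_one (h0 k) (by linarith [h1 k]) (by norm_num : (0:ℝ) ≤ 1/4)
  unfold zz; linarith

lemma zz_pow (h0 : ∀ j, 0 ≤ p j) (k : ι) : zz p k ^ 4 = p k / 16 := by
  unfold zz
  rw [div_pow, ← Real.rpow_natCast, ← Real.rpow_mul (h0 k)]
  norm_num

lemma RR_zero (k : ι) : RR p 0 k = zz p k ^ 2 := by simp [RR]

lemma RR_succ (j : ℕ) (k : ι) : RR p j k = RR p (j+1) k ^ 2 := by
  unfold RR
  rw [← Real.rpow_natCast (((zz p k ^ 2)) ^ ((1/2:ℝ)^(j+1))), ← Real.rpow_mul (sq_nonneg _)]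
  congr 1; rw [pow_succ]; push_cast; ring

lemma RR_nonneg (j : ℕ) (k : ι) : 0 ≤ RR p j k := Real.rpow_nonneg (sq_nonneg _) _

lemma RR_le_one (h0 : ∀ j, 0 ≤ p j) (h1 : ∀ j, p j ≤ 1/2) (j : ℕ) (k : ι) : RR p j k ≤ 1 := by
  refine Real.rpow_le_one (sq_nonneg _) ?_ (by positivity)
  nlinarith [zz_nonneg h0 k, zz_le h0 h1 k]

lemma RR_gap (h0 : ∀ j, 0 ≤ p j) (j : ℕ) (k : ι) :
    (1 - RR p j k) * zz p k ≤ 2 * (1/2:ℝ)^j := by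
  rcases (zz_nonneg h0 k).eq_or_lt with h | h
  · rw [← h]; simp
  · have hx : 0 < zz p k ^ 2 := by positivity
    unfold RR
    rw [Real.rpow_def_of_pos hx]
    have h2 := Real.add_one_le_exp (Real.log (zz p k ^ 2) * (1/2:ℝ)^j)
    have h3 : Real.log (zz p k ^ 2) = 2 * Real.log (zz p k) := by rw [Real.log_pow]; norm_num
    have h4 : Real.log ((zz p k)⁻¹) ≤ (zz p k)⁻¹ - 1 := Real.log_le_sub_one_of_pos (by positivity)
    rw [Real.log_inv] at h4
    have h5 : -Real.log (zz p k) * zz p k ≤ 1 := by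
      have := mul_le_mul_of_nonneg_right h4 h.le
      rw [sub_mul, inv_mul_cancel₀ h.ne'] at this
      linarith
    have ha : 0 ≤ (1/2:ℝ)^j := by positivity
    have h6 := mul_le_mul_of_nonneg_left h5 ha
    have h7 := mul_le_mul_of_nonneg_right h2 h.le
    rw [h3] at h7 ⊢
    linarith

lemma small_set_j (h0 : ∀ j, 0 ≤ p j) (h1 : ∀ j, p j ≤ 1/2) (u : (ι → Bool) → ℝ)
    (hu : ∀ x, u x ^ 2 = u x) (j : ℕ) :
    B p c (RR p j) u u ≤ E p c u ^ (1 + (1/2:ℝ)^j / 2) := by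
  have hμ : 0 ≤ E p c u := E_nonneg h0 h1 fun x => (ind01 hu x).1
  induction j with
  | zero =>
    have := small_set h0 h1 (c := c) (zz_pow h0) u hu
    rw [show RR p 0 = fun j => zz p j ^ 2 from funext RR_zero]
    refine le_of_sq_le_sq (this.trans (le_of_eq ?_)) (by positivity)
    rw [← Real.rpow_natCast (E p c u ^ _), ← Real.rpow_mul hμ, ← Real.rpow_natCast]
    norm_num
  | succ j ih =>
    have := B_half (p := p) (c := c) (RR_succ (p := p) j) u
    rw [B_one h0 h1, E_congr (F := fun x => u x * u x) (G := u) (fun x => by rw [← sq, hu])] at this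
    refine le_of_sq_le_sq ?_ (by positivity)
    calc _ ≤ _ := this
      _ ≤ E p c u * E p c u ^ (1 + (1/2:ℝ)^j / 2) := mul_le_mul_of_nonneg_left ih hμ
      _ = E p c u ^ (1:ℝ) * E p c u ^ (1 + (1/2:ℝ)^j / 2) := by rw [Real.rpow_one]
      _ = _ := by
        rw [← Real.rpow_add_of_nonneg hμ (by norm_num) (by positivity),
          ← Real.rpow_natCast (E p c u ^ _), ← Real.rpow_mul hμ]
        congr 1; rw [pow_succ]; push_cast; ring

lemma pY_bound {q Y θ s : ℝ} (hq0 : 0 ≤ q) (hq1 : q ≤ 1) (hY : 0 ≤ Y) (hθ : 0 ≤ θ)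
    (h : q * Y ≤ θ ^ 2) (hs0 : 0 ≤ s) (hs : s ≤ 1/2) :
    q * Y ^ ((1 + s) / 2) ≤ q ^ (1/4:ℝ) * θ ^ (1 + s) := by
  have e1 : q * Y ^ ((1 + s) / 2) = q ^ (1 - (1 + s)/2) * (q * Y) ^ ((1 + s)/2) := by
    rw [Real.mul_rpow hq0 hY, ← mul_assoc, ← Real.rpow_add_of_nonneg hq0 (by linarith) (by linarith)]
    simp
  have e2 : θ ^ (1 + s) = (θ ^ 2) ^ ((1 + s)/2) := by
    rw [← Real.rpow_natCast, ← Real.rpow_mul hθ]; congr 1; push_cast; ring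
  rw [e1, e2]
  refine mul_le_mul ?_ ?_ (by positivity) (by positivity)
  · exact Real.rpow_le_rpow_of_exponent_ge' hq0 hq1 (by norm_num) (by linarith)
  · exact Real.rpow_le_rpow (by positivity) h (by linarith)

lemma B_step (h0 : ∀ j, 0 ≤ p j) (h1 : ∀ j, p j ≤ 1/2) {r ρ : ι → ℝ}
    (hr0 : ∀ j, 0 ≤ r j) (hrρ : ∀ j, r j ≤ ρ j) (hρ : ∀ j, ρ j ≤ 1)
    {f g : (ι → Bool) → ℝ} (hf : ∀ x, f x ^ 2 = f x) (hg : ∀ x, g x ^ 2 = g x)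
    {θ s η : ℝ} (hθ : 0 ≤ θ) (hs0 : 0 ≤ s) (hs1 : s ≤ 1/2)
    (gf : ∀ k, (1 - p k) * E p c (Nf c k f) + p k * E p c (Pf c k f) ≤ θ / 2)
    (gg : ∀ k, (1 - p k) * E p c (Nf c k g) + p k * E p c (Pf c k g) ≤ θ / 2)
    (hB : ∀ u : (ι → Bool) → ℝ, (∀ x, u x ^ 2 = u x) → B p c ρ u u ≤ E p c u ^ (1 + s))
    (hη : ∀ k, (ρ k - r k) * zz p k ≤ η) :
    B p c r f g - B p c ρ f g ≤ Fintype.card ι * (4 * η * θ ^ (1 + s)) := by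
  have pos : ∀ u : (ι → Bool) → ℝ, (∀ x, u x ^ 2 = u x) → 0 ≤ E p c u :=
    fun u hu => E_nonneg h0 h1 fun x => (ind01 hu x).1
  have hρ0 : ∀ j, 0 ≤ ρ j := fun j => (hr0 j).trans (hrρ j)
  set Y : ι → ℝ := fun k => max (E p c (Nf c k f) * E p c (Pf c k g))
    (E p c (Nf c k g) * E p c (Pf c k f)) with hY
  have hY0 : ∀ k, 0 ≤ Y k := fun k => le_max_of_le_left
    (mul_nonneg (pos _ (Nf_sq hf k)) (pos _ (Pf_sq hg k)))
  have bnd : ∀ k, ∀ u v : (ι → Bool) → ℝ, (∀ x, u x ^ 2 = u x) → (∀ x, v x ^ 2 = v x) →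
      E p c u * E p c v ≤ Y k → B p c ρ u u * B p c ρ v v ≤ (Y k ^ ((1 + s)/2)) ^ 2 := by
    intro k u v hu hv h
    calc _ ≤ E p c u ^ (1 + s) * E p c v ^ (1 + s) :=
          mul_le_mul (hB u hu) (hB v hv) (B_self_nonneg hρ0 v) (Real.rpow_nonneg (pos u hu) _)
      _ = (E p c u * E p c v) ^ (1 + s) := by rw [Real.mul_rpow (pos u hu) (pos v hv)]
      _ ≤ Y k ^ (1 + s) := Real.rpow_le_rpow (mul_nonneg (pos u hu) (pos v hv)) h (by linarith)
      _ = _ := by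
        rw [← Real.rpow_natCast (Y k ^ _), ← Real.rpow_mul (hY0 k)]; congr 1; push_cast; ring
  have t := B_tele h0 h1 (c := c) hr0 hrρ hρ hf hg (M := fun k => Y k ^ ((1 + s)/2))
    (fun k => Real.rpow_nonneg (hY0 k) _)
    (fun k => bnd k _ _ (Nf_sq hf k) (Pf_sq hg k) (le_max_left _ _))
    (fun k => bnd k _ _ (Nf_sq hg k) (Pf_sq hf k) (le_max_right _ _))
  refine t.trans ?_
  rw [← nsmul_eq_mul, ← Finset.card_univ, ← Finset.sum_const]
  refine Finset.sum_le_sum fun k _ => ?_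
  have hpY : p k * Y k ≤ θ ^ 2 := by
    have n1 := pos _ (Nf_sq (c := c) hf k)
    have n2 := pos _ (Nf_sq (c := c) hg k)
    have p1 := mul_nonneg (h0 k) (pos _ (Pf_sq (c := c) hf k))
    have p2 := mul_nonneg (h0 k) (pos _ (Pf_sq (c := c) hg k))
    have g1 := gf k
    have g2 := gg k
    have hk := h1 k
    have a1 : E p c (Nf c k f) ≤ θ := by nlinarith
    have a2 : E p c (Nf c k g) ≤ θ := by nlinarith
    have a3 : p k * E p c (Pf c k f) ≤ θ := by nlinarith
    have a4 : p k * E p c (Pf c k g) ≤ θ := by nlinarith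
    rw [hY]
    simp only
    rw [mul_max_of_nonneg _ _ (h0 k)]
    refine max_le ?_ ?_
    · calc _ = E p c (Nf c k f) * (p k * E p c (Pf c k g)) := by ring
        _ ≤ θ * θ := mul_le_mul a1 a4 p2 hθ
        _ = _ := by ring
    · calc _ = E p c (Nf c k g) * (p k * E p c (Pf c k f)) := by ring
        _ ≤ θ * θ := mul_le_mul a2 a3 p1 hθ
        _ = _ := by ring
  have b := pY_bound (h0 k) (by linarith [h1 k]) (hY0 k) hθ hpY hs0 hs1
  have hz : p k ^ (1/4:ℝ) = 2 * zz p k := by unfold zz; ring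
  rw [hz] at b
  have hT : 0 ≤ θ ^ (1 + s) := Real.rpow_nonneg hθ _
  have b1 := mul_le_mul_of_nonneg_left b (sub_nonneg.2 (hrρ k))
  have b2 := mul_le_mul_of_nonneg_right (hη k) hT
  nlinarith

lemma exp_bd {y : ℝ} (hy : 0 < y) : Real.exp (-y) ≤ 2 / y ^ 2 := by
  have := Real.quadratic_le_exp_of_nonneg hy.le
  rw [Real.exp_neg, ← one_div, div_le_div_iff₀ (Real.exp_pos _) (by positivity)]
  nlinarith

lemma key (h0 : ∀ j, 0 ≤ p j) (h1 : ∀ j, p j ≤ 1/2)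
    {f g : (ι → Bool) → ℝ} (hf : ∀ x, f x ^ 2 = f x) (hg : ∀ x, g x ^ 2 = g x)
    (hfg : ∀ x, f x * g x = 0) {θ : ℝ} (hθ : 0 < θ) (hΛ : 1 ≤ - Real.log θ)
    (gf : ∀ k, (1 - p k) * E p c (Nf c k f) + p k * E p c (Pf c k f) ≤ θ / 2)
    (gg : ∀ k, (1 - p k) * E p c (Nf c k g) + p k * E p c (Pf c k g) ≤ θ / 2) :
    E p c f * E p c g ≤ 160 * Fintype.card ι * θ / (- Real.log θ) := by
  set Λ := - Real.log θ with hL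
  obtain ⟨J, hJ1, hJ2⟩ := exists_nat_pow_near hΛ (by norm_num : (1:ℝ) < 2)
  set n : ℝ := (Fintype.card ι : ℝ) with hn
  have hn0 : 0 ≤ n := by positivity
  have hΛ0 : 0 < Λ := by linarith
  have hexp : ∀ y : ℝ, θ ^ y = Real.exp (-(Λ * y)) := by
    intro y; rw [Real.rpow_def_of_pos hθ, hL]; congr 1; ring
  have s1 : B p c (RR p J) f g - B p c (fun _ => 1) f g ≤ n * (8 * θ * (1/2:ℝ)^J) := by
    refine (B_step h0 h1 (c := c) (RR_nonneg J) (RR_le_one h0 h1 J) (fun _ => le_rfl) hf hg hθ.le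
      le_rfl (by norm_num) gf gg (η := 2 * (1/2:ℝ)^J) ?_ ?_).trans (le_of_eq ?_)
    · intro u hu
      rw [B_one h0 h1, E_congr (F := fun x => u x * u x) (G := u) (fun x => by rw [← sq, hu])]
      simp
    · exact fun k => RR_gap h0 J k
    · rw [add_zero, Real.rpow_one]; ring
  have s2 : ∀ j, B p c (RR p j) f g - B p c (RR p (j+1)) f g ≤
      n * (8 * θ * (8 * 2 ^ (j+1) / Λ ^ 2)) := by
    intro j
    have hle : ∀ k, RR p j k ≤ RR p (j+1) k := fun k => by
      rw [RR_succ]; nlinarith [RR_nonneg (p := p) (j+1) k, RR_le_one h0 h1 (j+1) k]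
    have hj1 : (1/2:ℝ)^(j+1) ≤ 1 := pow_le_one₀ (by norm_num) (by norm_num)
    refine (B_step h0 h1 (c := c) (RR_nonneg j) hle (RR_le_one h0 h1 _) hf hg hθ.le
      (s := (1/2:ℝ)^(j+1)/2) (by positivity) (by linarith) gf gg (η := 2 * (1/2:ℝ)^(j+1))
      (fun u hu => small_set_j h0 h1 u hu (j+1)) ?_).trans ?_
    · intro k
      refine le_trans ?_ (RR_gap h0 (j+1) k)
      refine mul_le_mul_of_nonneg_right ?_ (zz_nonneg h0 k)
      rw [RR_succ j]; nlinarith [RR_nonneg (p := p) (j+1) k, RR_le_one h0 h1 (j+1) k, sq_nonneg (RR p (j+1) k - 1)]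
    · refine mul_le_mul_of_nonneg_left ?_ hn0
      rw [Real.rpow_add hθ, Real.rpow_one, hexp]
      have hb := exp_bd (y := Λ * ((1/2:ℝ)^(j+1)/2)) (by positivity)
      have ha : 0 ≤ 8 * θ * (1/2:ℝ)^(j+1) := by positivity
      have := mul_le_mul_of_nonneg_left hb ha
      calc _ = 8 * θ * (1/2:ℝ)^(j+1) * Real.exp (-(Λ * ((1/2:ℝ)^(j+1)/2))) := by ring
        _ ≤ _ := this
        _ = _ := by
          rw [one_div, inv_pow]
          field_simp
          norm_num
  have s3 : B p c (fun _ => 0) f g - B p c (RR p 0) f g ≤ n * (8 * θ * (2 / Λ)) := by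
    refine (B_step h0 h1 (c := c) (fun _ => le_rfl) (RR_nonneg 0) (RR_le_one h0 h1 0) hf hg hθ.le
      (s := 1/2) (by norm_num) (by norm_num) gf gg (η := 1) ?_ ?_).trans ?_
    · intro u hu
      have := small_set_j h0 h1 u hu 0 (c := c)
      simpa using this
    · intro k
      rw [sub_zero]
      have := zz_le h0 h1 k
      exact mul_le_one₀ (RR_le_one h0 h1 0 k) (zz_nonneg h0 k) (by linarith)
    · refine mul_le_mul_of_nonneg_left ?_ hn0
      rw [Real.rpow_add hθ, Real.rpow_one, hexp]
      have hb : Real.exp (-(Λ * (1/2))) ≤ 2 / Λ := by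
        have := Real.add_one_le_exp (Λ * (1/2))
        rw [Real.exp_neg, ← one_div, div_le_div_iff₀ (Real.exp_pos _) hΛ0]
        linarith
      have := mul_le_mul_of_nonneg_left hb hθ.le
      have h8 : 0 ≤ θ * (2/Λ) := by positivity
      linarith
  have s4 : ∀ m, B p c (RR p 0) f g - B p c (RR p m) f g ≤
      n * (8 * θ * (8 * (2 * 2 ^ m) / Λ ^ 2)) := by
    intro m
    induction m with
    | zero => rw [sub_self]; positivity
    | succ m ih =>
      have := s2 m
      have e : n * (8 * θ * (8 * (2 * 2 ^ (m+1)) / Λ ^ 2)) = n * (8 * θ * (8 * (2 * 2 ^ m) / Λ ^ 2))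
        + n * (8 * θ * (8 * 2 ^ (m+1) / Λ ^ 2)) := by rw [pow_succ]; ring
      rw [e]; linarith
  have s5 := s4 J
  have z1 : B p c (fun _ => 1) f g = 0 := by
    rw [B_one h0 h1]; simp [hfg, E]
  rw [B_zero] at s3
  have t1 : (1/2:ℝ)^J ≤ 2 / Λ := by
    rw [one_div, inv_pow, ← one_div, div_le_div_iff₀ (by positivity) hΛ0]
    rw [pow_succ] at hJ2; linarith
  have t2 : 8 * (2 * 2 ^ J) / Λ ^ 2 ≤ 16 / Λ := by
    rw [div_le_div_iff₀ (by positivity) hΛ0]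
    nlinarith
  have u1 : n * (8 * θ * (1/2:ℝ)^J) ≤ n * (8 * θ * (2 / Λ)) := by gcongr
  have u2 : n * (8 * θ * (8 * (2 * 2 ^ J) / Λ ^ 2)) ≤ n * (8 * θ * (16 / Λ)) := by gcongr
  calc _ ≤ n * (8 * θ * (2 / Λ)) + n * (8 * θ * (2 / Λ)) + n * (8 * θ * (16 / Λ)) := by linarith
    _ = _ := by ring

end

section
open Classical in
/-- indicator that the value is forced to be `b` no matter what `S` does -/
noncomputable def hh {n : ℕ} (f : (Fin n → Bool) → Bool) (S : Finset (Fin n)) (b : Bool)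
    (x : Fin n → Bool) : ℝ :=
  if ∀ y : Fin n → Bool, (∀ j ∉ S, y j = x j) → f y = b then 1 else 0

variable {n : ℕ} {p : Fin n → ℝ} {c : Fin n → Bool}

lemma hh_sq (f : (Fin n → Bool) → Bool) (S : Finset (Fin n)) (b : Bool) (x : Fin n → Bool) :
    hh f S b x ^ 2 = hh f S b x := by
  unfold hh; split_ifs <;> norm_num

lemma hh_disj (f : (Fin n → Bool) → Bool) (S : Finset (Fin n)) (x : Fin n → Bool) :
    hh f S false x * hh f S true x = 0 := by
  unfold hh
  split_ifs with h1 h2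
  · have a := h1 x (fun _ _ => rfl)
    have b := h2 x (fun _ _ => rfl)
    simp [a] at b
  all_goals simp

lemma hh_insert (f : (Fin n → Bool) → Bool) (S : Finset (Fin n)) (b : Bool) (k : Fin n)
    (x : Fin n → Bool) : hh f (insert k S) b x
      = hh f S b (Function.update x k (c k)) * hh f S b (Function.update x k (!c k)) := by
  have key : (∀ y : Fin n → Bool, (∀ j ∉ insert k S, y j = x j) → f y = b) ↔
      (∀ y : Fin n → Bool, (∀ j ∉ S, y j = Function.update x k (c k) j) → f y = b) ∧
      (∀ y : Fin n → Bool, (∀ j ∉ S, y j = Function.update x k (!c k) j) → f y = b) := by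
    constructor
    · intro h
      constructor <;>
      · intro y hy
        refine h y fun j hj => ?_
        rw [Finset.mem_insert, not_or] at hj
        rw [hy j hj.2, Function.update_of_ne hj.1]
    · rintro ⟨ha, hb⟩ y hy
      by_cases hk : y k = c k
      · refine ha y fun j hj => ?_
        by_cases hjk : j = k
        · subst hjk; simp [hk]
        · rw [Function.update_of_ne hjk]; exact hy j (by simp [hjk, hj])
      · have hk' : y k = !c k := by revert hk; cases y k <;> cases c k <;> simp
        refine hb y fun j hj => ?_
        by_cases hjk : j = k
        · subst hjk; simp [hk']
        · rw [Function.update_of_ne hjk]; exact hy j (by simp [hjk, hj])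
  unfold hh
  by_cases h1 : ∀ y : Fin n → Bool, (∀ j ∉ S, y j = Function.update x k (c k) j) → f y = b <;>
  by_cases h2 : ∀ y : Fin n → Bool, (∀ j ∉ S, y j = Function.update x k (!c k) j) → f y = b
  · rw [if_pos (key.2 ⟨h1, h2⟩), if_pos h1, if_pos h2]; norm_num
  · rw [if_neg (fun h => h2 (key.1 h).2), if_neg h2]; norm_num
  · rw [if_neg (fun h => h1 (key.1 h).1), if_neg h1]; norm_num
  · rw [if_neg (fun h => h2 (key.1 h).2), if_neg h2]; norm_num

lemma gain (f : (Fin n → Bool) → Bool) (S : Finset (Fin n)) (b : Bool) (k : Fin n) :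
    E p c (hh f S b) = E p c (hh f (insert k S) b) +
      ((1 - p k) * E p c (Nf c k (hh f S b)) + p k * E p c (Pf c k (hh f S b))) := by
  rw [E_int k, ← E_smul, ← E_smul, ← E_add, ← E_add]
  refine E_congr fun x => ?_
  rw [hh_insert (c := c)]
  unfold Nf Pf; ring

lemma step (hn : 16 ≤ n) (h0 : ∀ j, 0 ≤ p j) (h1 : ∀ j, p j ≤ 1/2) {ε : ℝ} (hε : 0 < ε)
    (f : (Fin n → Bool) → Bool) (S : Finset (Fin n))
    (ha : ε < E p c (hh f S false)) (hb : ε < E p c (hh f S true)) :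
    ∃ k, E p c (hh f (insert k S) false) + E p c (hh f (insert k S) true)
      ≤ (1 - ε * Real.log n / (1284 * n)) * (E p c (hh f S false) + E p c (hh f S true)) := by
  have hnR : (16:ℝ) ≤ n := by exact_mod_cast hn
  have hn0 : (0:ℝ) < n := by linarith
  have hlog : 2 ≤ Real.log n := by
    have h2 := Real.log_two_gt_d9
    have : Real.log 16 ≤ Real.log n := Real.log_le_log (by norm_num) hnR
    have e : Real.log 16 = 4 * Real.log 2 := by
      rw [show (16:ℝ) = 2 ^ 4 by norm_num, Real.log_pow]; norm_num
    linarith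
  have le1 : ∀ b, E p c (hh f S b) ≤ 1 := fun b => by
    rw [← E_one (p := p) (c := c)]
    exact E_mono h0 h1 fun x => (ind01 (hh_sq f S b) x).2
  set a0 := E p c (hh f S false) with ha0
  set a1 := E p c (hh f S true) with ha1
  have l0 := le1 false
  have l1 := le1 true
  rw [← ha0] at l0
  rw [← ha1] at l1
  have hpos : 0 < a0 * a1 := mul_pos (by linarith) (by linarith)
  have hle : a0 * a1 ≤ 1 := by nlinarith
  set θ := a0 * a1 * Real.log n / (321 * n) with hθ
  have hθ0 : 0 < θ := by positivity
  have hsq : √(n:ℝ) * √(n:ℝ) = n := Real.mul_self_sqrt hn0.le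
  have hsp : 0 < √(n:ℝ) := Real.sqrt_pos.2 hn0
  have hl2 : Real.log n ≤ 2 * √(n:ℝ) := by
    have e : Real.log (√(n:ℝ)) = Real.log n / 2 := Real.log_sqrt hn0.le
    have := Real.log_le_sub_one_of_pos hsp
    linarith
  have hΛ : Real.log n / 2 ≤ - Real.log θ := by
    have hlt : θ ≤ (√(n:ℝ))⁻¹ := by
      rw [hθ, ← one_div, div_le_div_iff₀ (by positivity) hsp]
      have : a0 * a1 * Real.log n ≤ 1 * (2 * √(n:ℝ)) :=
        mul_le_mul hle hl2 (by linarith) (by norm_num)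
      nlinarith
    have := Real.log_le_log hθ0 hlt
    rw [Real.log_inv, Real.log_sqrt hn0.le] at this
    linarith
  have gn : ∀ b k, 0 ≤ (1 - p k) * E p c (Nf c k (hh f S b)) + p k * E p c (Pf c k (hh f S b)) := by
    intro b k
    have q1 : 0 ≤ E p c (Nf c k (hh f S b)) :=
      E_nonneg h0 h1 fun x => (ind01 (Nf_sq (hh_sq f S b) k) x).1
    have q2 : 0 ≤ E p c (Pf c k (hh f S b)) :=
      E_nonneg h0 h1 fun x => (ind01 (Pf_sq (hh_sq f S b) k) x).1
    have hk : 0 ≤ 1 - p k := by linarith [h1 k]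
    exact add_nonneg (mul_nonneg hk q1) (mul_nonneg (h0 k) q2)
  have ex : ∃ k, θ / 2 < ((1 - p k) * E p c (Nf c k (hh f S false)) + p k * E p c (Pf c k (hh f S false)))
      + ((1 - p k) * E p c (Nf c k (hh f S true)) + p k * E p c (Pf c k (hh f S true))) := by
    by_contra hcon
    push Not at hcon
    have K := key h0 h1 (c := c) (hh_sq f S false) (hh_sq f S true) (hh_disj f S) hθ0 (by linarith)
      (fun k => by linarith [hcon k, gn true k]) (fun k => by linarith [hcon k, gn false k])
    rw [Fintype.card_fin, ← ha0, ← ha1, le_div_iff₀ (by linarith)] at K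
    have K2 : a0 * a1 * (Real.log n / 2) ≤ 160 * n * θ :=
      (mul_le_mul_of_nonneg_left hΛ hpos.le).trans K
    have K3 : 160 * n * θ = 160 / 321 * (a0 * a1 * Real.log n) := by
      rw [hθ]; field_simp
    have : 0 < a0 * a1 * Real.log n := by positivity
    linarith
  obtain ⟨k, hk⟩ := ex
  refine ⟨k, ?_⟩
  have g0 := gain (p := p) (c := c) f S false k
  have g1 := gain (p := p) (c := c) f S true k
  rw [← ha0] at g0
  rw [← ha1] at g1
  have hprod : ε * (a0 + a1) / 2 ≤ a0 * a1 := by nlinarith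
  have hfin : ε * Real.log n / (1284 * n) * (a0 + a1) ≤ θ / 2 := by
    have e1 : ε * Real.log n / (1284 * n) * (a0 + a1) = (ε * (a0 + a1) / 2) * (Real.log n / (642 * n)) := by
      field_simp; ring
    have e2 : θ / 2 = a0 * a1 * (Real.log n / (642 * n)) := by rw [hθ]; field_simp; ring
    rw [e1, e2]
    exact mul_le_mul_of_nonneg_right hprod (by positivity)
  linarith

lemma finale (hn : 16 ≤ n) (h0 : ∀ j, 0 ≤ p j) (h1 : ∀ j, p j ≤ 1/2) {ε : ℝ} (hε : 0 < ε)
    (hε2 : ε ≤ 1/2) (f : (Fin n → Bool) → Bool) :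
    ∃ (b : Bool) (S : Finset (Fin n)),
      (S.card : ℝ) ≤ 1285 * (Real.log (1/ε) * n / (ε * Real.log n)) ∧ E p c (hh f S (!b)) ≤ ε := by
  by_contra hcon
  push Not at hcon
  have hnR : (16:ℝ) ≤ n := by exact_mod_cast hn
  have hn0 : (0:ℝ) < n := by linarith
  have hlog : 0 < Real.log n := Real.log_pos (by linarith)
  have hlogn : Real.log n ≤ n := by linarith [Real.log_le_sub_one_of_pos hn0]
  set δ := ε * Real.log n / (1284 * n) with hδ
  have hδ0 : 0 < δ := by positivity
  have hle : Real.log 2 ≤ Real.log (1/ε) := by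
    refine Real.log_le_log (by norm_num) ?_
    rw [le_div_iff₀ hε]; linarith
  have hl2 := Real.log_two_gt_d9
  set bd := Real.log (1/ε) * n / (ε * Real.log n) with hbd
  have hbd1 : 1 ≤ bd := by
    rw [hbd, le_div_iff₀ (by positivity)]
    have : (1/2:ℝ) * n ≤ Real.log (1/ε) * n := by gcongr; linarith
    have : ε * Real.log n ≤ 1/2 * n := mul_le_mul hε2 hlogn hlog.le (by norm_num)
    linarith
  set m := ⌈Real.log (1/ε) / δ⌉₊ with hm
  have hm1 : (m:ℝ) ≤ 1285 * bd := by
    have := (Nat.ceil_lt_add_one (a := Real.log (1/ε) / δ) (by apply div_nonneg <;> linarith)).le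
    have e : Real.log (1/ε) / δ = 1284 * bd := by rw [hδ, hbd]; field_simp
    rw [← hm, e] at this
    linarith
  have it : ∀ j ≤ m, ∃ S : Finset (Fin n), S.card ≤ j ∧
      E p c (hh f S false) + E p c (hh f S true) ≤ Real.exp (-(δ * j)) := by
    intro j
    induction j with
    | zero =>
      intro _
      refine ⟨∅, by simp, ?_⟩
      rw [← E_add]
      simp only [Nat.cast_zero, mul_zero, neg_zero, Real.exp_zero]
      rw [← E_one (p := p) (c := c)]
      refine E_mono h0 h1 fun x => ?_
      have d := hh_disj f ∅ x
      have u := hh_sq f ∅ false x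
      have v := hh_sq f ∅ true x
      nlinarith [sq_nonneg (hh f ∅ false x + hh f ∅ true x - 1)]
    | succ j ih =>
      intro hj
      obtain ⟨S, hS, hA⟩ := ih (by omega)
      have hc : (S.card:ℝ) ≤ 1285 * bd := le_trans (by exact_mod_cast (by omega : S.card ≤ m)) hm1
      have q0 := hcon true S hc
      have q1 := hcon false S hc
      simp only [Bool.not_true, Bool.not_false] at q0 q1
      obtain ⟨k, hk⟩ := step hn h0 h1 hε f S q0 q1
      refine ⟨insert k S, (Finset.card_insert_le _ _).trans (by omega), hk.trans ?_⟩
      have e1 : 1 - δ ≤ Real.exp (-δ) := by linarith [Real.add_one_le_exp (-δ)]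
      calc _ ≤ Real.exp (-δ) * (E p c (hh f S false) + E p c (hh f S true)) :=
            mul_le_mul_of_nonneg_right e1 (by linarith)
        _ ≤ Real.exp (-δ) * Real.exp (-(δ * j)) := mul_le_mul_of_nonneg_left hA (Real.exp_pos _).le
        _ = _ := by rw [← Real.exp_add]; congr 1; push_cast; ring
  obtain ⟨S, hS, hA⟩ := it m le_rfl
  have hc : (S.card:ℝ) ≤ 1285 * bd := le_trans (by exact_mod_cast hS) hm1
  have q0 := hcon true S hc
  have q1 := hcon false S hc
  simp only [Bool.not_true, Bool.not_false] at q0 q1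
  have hfin : Real.exp (-(δ * m)) ≤ ε := by
    have : Real.log (1/ε) / δ ≤ m := Nat.le_ceil _
    rw [div_le_iff₀ hδ0, one_div, Real.log_inv] at this
    rw [← Real.le_log_iff_exp_le hε]
    linarith
  linarith

end

lemma infl_eq {n : ℕ} (μs : Fin n → Measure Bool) (hμ : ∀ i, IsProbabilityMeasure (μs i))
    (p : Fin n → ℝ) (c : Fin n → Bool) (hw : ∀ i b, (μs i {b}).toReal = wt p c i b)
    (f : (Fin n → Bool) → Bool) (S : Finset (Fin n)) (b : Bool) :
    infl (Measure.pi μs) f S b = 1 - E p c (hh f S (!b)) := by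
  classical
  have hs : ∀ x : Fin n → Bool, (Measure.pi μs).real {x} = W p c x := by
    intro x
    rw [Measure.real, Measure.pi_singleton, ENNReal.toReal_prod]
    exact Finset.prod_congr rfl fun i _ => hw i _
  unfold infl
  set A : Set (Fin n → Bool) := {x | ∃ y, (∀ j ∉ S, y j = x j) ∧ f y = b} with hA
  have e1 : (Measure.pi μs A).toReal = ∑ x, W p c x * (if x ∈ A then 1 else 0) := by
    have : A = ((Finset.univ.filter (· ∈ A) : Finset (Fin n → Bool)) : Set (Fin n → Bool)) := by
      ext; simp
    change (Measure.pi μs).real A = _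
    conv_lhs => rw [this]
    rw [← sum_measureReal_singleton, Finset.sum_filter]
    refine Finset.sum_congr rfl fun x _ => ?_
    rw [hs]; split_ifs <;> simp
  rw [e1, eq_sub_iff_add_eq]
  change E p c (fun x => if x ∈ A then (1:ℝ) else 0) + _ = _
  rw [← E_add]
  refine Eq.trans (E_congr (G := fun _ => (1:ℝ)) fun x => ?_) E_one
  unfold hh
  by_cases hx : x ∈ A
  · rw [if_pos hx, if_neg]
    · simp
    · intro h
      obtain ⟨y, hy, hy2⟩ := hx
      have := h y hy
      rw [hy2] at this
      simp at this
  · rw [if_neg hx, if_pos]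
    · simp
    · intro y hy
      by_contra h
      exact hx ⟨y, hy, by revert h; cases f y <;> cases b <;> simp⟩

end SRB

/-- over any product measure on the Boolean cube, any Boolean function can be
biased towards some value `b` by a coalition of `O(log(1/ε)·n/(ε·log n) + n·loglog n/(ε·log n))`
players. -/
theorem single_round_boolean :
    ∃ C : ℝ, C > 0 ∧
      ∀ n : ℕ, 16 ≤ n →
      ∀ μs : Fin n → Measure Bool, (∀ i, IsProbabilityMeasure (μs i)) →
      ∀ ε : ℝ, 0 < ε → ε ≤ 1/2 →
      ∀ f : (Fin n → Bool) → Bool,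
      ∃ (b : Bool) (S : Finset (Fin n)),
        (S.card : ℝ) ≤ C * (Real.logb 2 (1/ε) * n / (ε * Real.logb 2 n)
            + n * Real.logb 2 (Real.logb 2 n) / (ε * Real.logb 2 n)) ∧
        infl (Measure.pi μs) f S b ≥ 1 - ε := by
  refine ⟨1285, by norm_num, ?_⟩
  intro n hn μs hμ ε hε hε2 f
  set a : Fin n → ℝ := fun i => (μs i {true}).toReal with ha
  have hsum : ∀ i, (μs i {true}).toReal + (μs i {false}).toReal = 1 := by
    intro i
    have h := probReal_compl_eq_one_sub (μ := μs i) (s := {true}) (by measurability)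
    have e : ({true}ᶜ : Set Bool) = {false} := by ext x; cases x <;> simp
    rw [e] at h
    simp only [Measure.real] at h
    linarith
  set c : Fin n → Bool := fun i => decide (1/2 ≤ a i) with hc
  set p : Fin n → ℝ := fun i => if 1/2 ≤ a i then 1 - a i else a i with hp
  have h0 : ∀ j, 0 ≤ p j := by
    intro j
    have h3 : 0 ≤ (μs j {false}).toReal := ENNReal.toReal_nonneg
    have h4 : 0 ≤ a j := ENNReal.toReal_nonneg
    have := hsum j
    simp only [hp]; split_ifs
    · simp only [ha]; linarith
    · exact h4
  have h1 : ∀ j, p j ≤ 1/2 := by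
    intro j
    simp only [hp]; split_ifs <;> linarith
  have hw : ∀ i b, (μs i {b}).toReal = SRB.wt p c i b := by
    intro i b
    have := hsum i
    have hai : a i = (μs i {true}).toReal := rfl
    unfold SRB.wt
    by_cases h : 1/2 ≤ a i <;> cases b <;> simp only [hp, hc, h] <;> simp <;> linarith
  obtain ⟨b, S, hS, hE⟩ := SRB.finale hn h0 h1 (c := c) hε hε2 f
  refine ⟨b, S, hS.trans ?_, ?_⟩
  · have hnR : (16:ℝ) ≤ n := by exact_mod_cast hn
    have hlog : 0 < Real.log n := Real.log_pos (by linarith)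
    have hl2 : 0 < Real.log 2 := Real.log_pos (by norm_num)
    have e : Real.logb 2 (1/ε) * n / (ε * Real.logb 2 n) = Real.log (1/ε) * n / (ε * Real.log n) := by
      unfold Real.logb; field_simp
    have h2 : 1 ≤ Real.logb 2 n := by
      rw [Real.le_logb_iff_rpow_le (by norm_num) (by linarith)]; norm_num; linarith
    have h3 : 0 ≤ Real.logb 2 (Real.logb 2 n) := Real.logb_nonneg (by norm_num) h2
    have h4 : 0 ≤ n * Real.logb 2 (Real.logb 2 n) / (ε * Real.logb 2 n) := by positivity
    rw [e]
    linarith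
  · rw [SRB.infl_eq μs hμ p c hw]
    linarith
end

section
/- There is a universal constant C' > 0 such that the following holds. Let ε ∈ (0,1/2], let 𝓡 be a finite set with |𝓡| ≥ 2, and set m = ⌈log |𝓡|⌉ and C = C'·( m^3·log(m/ε)/ε^2 + 1/ε + 2^m ). Then for every sufficiently large n (depending on ε and |𝓡|), every product probability measure μ on {0,1}^n, and every f : {0,1}^n → 𝓡, there exist b ∈ 𝓡 and S ⊆ [n] with |S| ≤ C·n·log log n/log n such that I_S^b(f) ≥ 1 − ε. -/
open MeasureTheory

set_option linter.all false


section KKL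
open Finset Function

noncomputable def Ex {Ω : Type*} [Fintype Ω] (p : Ω → ℝ) (f : Ω → ℝ) : ℝ := ∑ x, p x * f x

structure IsP {Ω : Type*} [Fintype Ω] (p : Ω → ℝ) : Prop where
  nn : ∀ x, 0 ≤ p x
  one : ∑ x, p x = 1

namespace IsP
variable {Ω : Type*} [Fintype Ω] {p : Ω → ℝ}

lemma mono (hp : IsP p) {f g : Ω → ℝ} (h : ∀ x, f x ≤ g x) : Ex p f ≤ Ex p g :=
  Finset.sum_le_sum fun x _ => mul_le_mul_of_nonneg_left (h x) (hp.nn x)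

lemma const (hp : IsP p) (c : ℝ) : Ex p (fun _ => c) = c := by
  simp [Ex, ← Finset.sum_mul, hp.one]

lemma nonneg (hp : IsP p) {f : Ω → ℝ} (h : ∀ x, 0 ≤ f x) : 0 ≤ Ex p f :=
  Finset.sum_nonneg fun x _ => mul_nonneg (hp.nn x) (h x)

lemma exists_le (hp : IsP p) {f : Ω → ℝ} {c : ℝ} (h : Ex p f ≤ c) : ∃ x, f x ≤ c := by
  by_contra! hc
  have h1 : ∃ x, 0 < p x := by
    by_contra! h2
    have := hp.one
    have h3 : ∑ x, p x ≤ 0 := Finset.sum_nonpos fun x _ => h2 x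
    linarith
  obtain ⟨x, hx⟩ := h1
  have : Ex p (fun _ => c) < Ex p f := by
    apply Finset.sum_lt_sum
    · intro y _; exact mul_le_mul_of_nonneg_left (hc y).le (hp.nn y)
    · exact ⟨x, Finset.mem_univ _, mul_lt_mul_of_pos_left (hc x) hx⟩
  rw [hp.const] at this
  linarith

end IsP

section lin
variable {Ω : Type*} [Fintype Ω] (p : Ω → ℝ)
lemma Ex_add (f g : Ω → ℝ) : Ex p (fun x => f x + g x) = Ex p f + Ex p g := by
  simp [Ex, mul_add, Finset.sum_add_distrib]
lemma Ex_sub (f g : Ω → ℝ) : Ex p (fun x => f x - g x) = Ex p f - Ex p g := by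
  simp [Ex, mul_sub, Finset.sum_sub_distrib]
lemma Ex_mul (c : ℝ) (f : Ω → ℝ) : Ex p (fun x => c * f x) = c * Ex p f := by
  simp only [Ex, Finset.mul_sum]; exact Finset.sum_congr rfl fun x _ => by ring
lemma Ex_sum {κ : Type*} (s : Finset κ) (f : κ → Ω → ℝ) :
    Ex p (fun x => ∑ k ∈ s, f k x) = ∑ k ∈ s, Ex p (f k) := by
  simp only [Ex, Finset.mul_sum]; exact Finset.sum_comm
lemma Ex_comm {Ω' : Type*} [Fintype Ω'] (p' : Ω' → ℝ) (f : Ω → Ω' → ℝ) :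
    Ex p (fun x => Ex p' (fun y => f x y)) = Ex p' (fun y => Ex p (fun x => f x y)) := by
  simp only [Ex, Finset.mul_sum]; rw [Finset.sum_comm]
  exact Finset.sum_congr rfl fun x _ => Finset.sum_congr rfl fun y _ => by ring
end lin

variable {ι α : Type*} [Fintype ι] [DecidableEq ι] [Fintype α]

def piw (w : ι → α → ℝ) (x : ι → α) : ℝ := ∏ i, w i (x i)

lemma Ex_prod (w : ι → α → ℝ) (h : ι → α → ℝ) :
    Ex (piw w) (fun x => ∏ i, h i (x i)) = ∏ i, Ex (w i) (h i) := by
  unfold Ex piw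
  rw [Finset.prod_univ_sum]
  simp [Finset.prod_mul_distrib]

lemma IsP.piw {w : ι → α → ℝ} (hw : ∀ i, IsP (w i)) : IsP (piw w) := by
  refine ⟨fun x => Finset.prod_nonneg fun i _ => (hw i).nn _, ?_⟩
  have := Ex_prod w (fun _ _ => 1)
  simpa [Ex, (hw _).one] using this

/-- average over coordinate i -/
noncomputable def av (w : ι → α → ℝ) (i : ι) (f : (ι → α) → ℝ) (x : ι → α) : ℝ :=
  Ex (w i) (fun a => f (update x i a))

lemma piw_swap (w : ι → α → ℝ) (i : ι) (x : ι → α) (a : α) :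
    piw w (update x i a) * w i (x i) = piw w x * w i a := by
  unfold piw
  rw [← Finset.mul_prod_erase univ _ (Finset.mem_univ i),
    ← Finset.mul_prod_erase univ (fun j => w j (x j)) (Finset.mem_univ i)]
  have : ∏ j ∈ univ.erase i, w j (update x i a j) = ∏ j ∈ univ.erase i, w j (x j) := by
    apply Finset.prod_congr rfl
    intro j hj
    rw [update_of_ne (Finset.ne_of_mem_erase hj)]
  rw [this, update_self]; ring

lemma Ex_av {w : ι → α → ℝ} (hw : ∀ i, IsP (w i)) (i : ι) (f : (ι → α) → ℝ) :
    Ex (piw w) (av w i f) = Ex (piw w) f := by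
  have h1 : Ex (piw w) (av w i f)
      = ∑ z : (ι → α) × α, piw w z.1 * w i z.2 * f (update z.1 i z.2) := by
    simp only [Ex, av, Finset.mul_sum]
    rw [Fintype.sum_prod_type]
    exact Finset.sum_congr rfl fun x _ => Finset.sum_congr rfl fun y _ => by ring
  have h2 : Ex (piw w) f = ∑ z : (ι → α) × α, piw w z.1 * w i z.2 * f z.1 := by
    rw [Fintype.sum_prod_type]
    unfold Ex
    refine Finset.sum_congr rfl fun x _ => ?_
    have : ∑ y, piw w x * w i y * f x = piw w x * f x * ∑ y, w i y := by
      rw [Finset.mul_sum]; exact Finset.sum_congr rfl fun y _ => by ring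
    rw [this, (hw i).one, mul_one]
  have inv : Function.Involutive
      (fun z : (ι → α) × α => ((update z.1 i z.2, z.1 i) : (ι → α) × α)) := by
    rintro ⟨x, a⟩; simp
  rw [h1, h2, ← Equiv.sum_comp inv.toPerm]
  refine Finset.sum_congr rfl fun z _ => ?_
  simp [Function.Involutive.coe_toPerm, piw_swap]

section av
variable {w : ι → α → ℝ}

lemma av_add (i : ι) (f g : (ι → α) → ℝ) :
    av w i (fun x => f x + g x) = fun x => av w i f x + av w i g x := by
  funext x; exact Ex_add _ _ _
lemma av_sub (i : ι) (f g : (ι → α) → ℝ) :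
    av w i (fun x => f x - g x) = fun x => av w i f x - av w i g x := by
  funext x; exact Ex_sub _ _ _
lemma av_mul (i : ι) (c : ℝ) (f : (ι → α) → ℝ) :
    av w i (fun x => c * f x) = fun x => c * av w i f x := by
  funext x; exact Ex_mul _ _ _
lemma av_mono (hw : ∀ i, IsP (w i)) (i : ι) {f g : (ι → α) → ℝ} (h : ∀ x, f x ≤ g x) (x) :
    av w i f x ≤ av w i g x := (hw i).mono fun a => h _
lemma av_const (hw : ∀ i, IsP (w i)) (i : ι) (c : ℝ) :
    av w i (fun _ => c) = fun _ => c := by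
  funext x; exact (hw i).const c
lemma av_update (i : ι) (f : (ι → α) → ℝ) (x : ι → α) (a : α) :
    av w i f (update x i a) = av w i f x := by simp [av]
/-- pull out -/
lemma av_pull (i : ι) (f g : (ι → α) → ℝ) (hg : ∀ x a, g (update x i a) = g x) :
    av w i (fun x => g x * f x) = fun x => g x * av w i f x := by
  funext x; simp only [av, hg]; exact Ex_mul _ _ _
lemma av_indep (hw : ∀ i, IsP (w i)) (i : ι) (g : (ι → α) → ℝ)
    (hg : ∀ x a, g (update x i a) = g x) : av w i g = g := by
  funext x; simp only [av, hg]; exact (hw i).const _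
lemma av_comm (i j : ι) (f : (ι → α) → ℝ) : av w i (av w j f) = av w j (av w i f) := by
  by_cases h : i = j
  · rw [h]
  · funext x
    simp only [av]
    rw [Ex_comm]
    simp only [update_comm h]

end av

/-- iterated average -/
noncomputable def avl (w : ι → α → ℝ) (l : List ι) (f : (ι → α) → ℝ) : (ι → α) → ℝ :=
  l.foldr (av w) f

section avl
variable {w : ι → α → ℝ}
@[simp] lemma avl_nil (f : (ι → α) → ℝ) : avl w [] f = f := rfl
@[simp] lemma avl_cons (i : ι) (l : List ι) (f : (ι → α) → ℝ) :
    avl w (i :: l) f = av w i (avl w l f) := rfl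

lemma avl_add (l : List ι) (f g : (ι → α) → ℝ) :
    avl w l (fun x => f x + g x) = fun x => avl w l f x + avl w l g x := by
  induction l with
  | nil => rfl
  | cons i l ih => simp only [avl_cons, ih, av_add]
lemma avl_sub (l : List ι) (f g : (ι → α) → ℝ) :
    avl w l (fun x => f x - g x) = fun x => avl w l f x - avl w l g x := by
  induction l with
  | nil => rfl
  | cons i l ih => simp only [avl_cons, ih, av_sub]
lemma avl_mul (l : List ι) (c : ℝ) (f : (ι → α) → ℝ) :
    avl w l (fun x => c * f x) = fun x => c * avl w l f x := by
  induction l with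
  | nil => rfl
  | cons i l ih => simp only [avl_cons, ih, av_mul]
lemma avl_const (hw : ∀ i, IsP (w i)) (l : List ι) (c : ℝ) :
    avl w l (fun _ => c) = fun _ => c := by
  induction l with
  | nil => rfl
  | cons i l ih => simp only [avl_cons, ih, av_const hw]
lemma avl_mono (hw : ∀ i, IsP (w i)) (l : List ι) {f g : (ι → α) → ℝ}
    (h : ∀ x, f x ≤ g x) : ∀ x, avl w l f x ≤ avl w l g x := by
  induction l with
  | nil => exact h
  | cons i l ih => exact av_mono hw i ih
lemma avl_nonneg (hw : ∀ i, IsP (w i)) (l : List ι) {f : (ι → α) → ℝ}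
    (h : ∀ x, 0 ≤ f x) (x) : 0 ≤ avl w l f x := by
  have := avl_mono hw l (f := fun _ => 0) h x
  rwa [avl_const hw] at this
lemma avl_sum {κ : Type*} (s : Finset κ) (hw : ∀ i, IsP (w i)) (l : List ι)
    (f : κ → (ι → α) → ℝ) :
    avl w l (fun x => ∑ k ∈ s, f k x) = fun x => ∑ k ∈ s, avl w l (f k) x := by
  classical
  induction s using Finset.induction_on with
  | empty => simp [avl_const hw]
  | insert a s ha ih => simp only [Finset.sum_insert ha]; rw [avl_add, ih]
lemma avl_av (l : List ι) (i : ι) (f : (ι → α) → ℝ) :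
    avl w l (av w i f) = av w i (avl w l f) := by
  induction l with
  | nil => rfl
  | cons j l ih => simp only [avl_cons, ih, av_comm]
lemma avl_subst (l : List ι) (i : ι) (hi : i ∉ l) (f : (ι → α) → ℝ) (a : α) : ∀ x,
    avl w l f (update x i a) = avl w l (fun y => f (update y i a)) x := by
  induction l with
  | nil => intro x; rfl
  | cons j l ih =>
    intro x
    simp only [List.mem_cons, not_or] at hi
    simp only [avl_cons, av]
    congr 1; funext b
    rw [update_comm hi.1, ih hi.2]
lemma Ex_avl (hw : ∀ i, IsP (w i)) (l : List ι) (f : (ι → α) → ℝ) :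
    Ex (piw w) (avl w l f) = Ex (piw w) f := by
  induction l with
  | nil => rfl
  | cons i l ih => rw [avl_cons, Ex_av hw, ih]
lemma avl_update (l : List ι) (i : ι) (hi : i ∈ l) (f : (ι → α) → ℝ) (a : α) :
    ∀ x : ι → α, avl w l f (update x i a) = avl w l f x := by
  induction l with
  | nil => simp at hi
  | cons j l ih =>
    intro x
    by_cases hij : i = j
    · subst hij; rw [avl_cons, av_update]
    · have h : i ∈ l := by simpa [hij] using hi
      simp only [avl_cons, av]; congr 1; funext b
      rw [update_comm hij, ih h]
lemma const_of_update (g : (ι → α) → ℝ) (h : ∀ i x a, g (update x i a) = g x) (x y : ι → α) :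
    g x = g y := by
  classical
  have : ∀ s : Finset ι, g (fun i => if i ∈ s then x i else y i) = g y := by
    intro s
    induction s using Finset.induction_on with
    | empty => simp
    | insert j s hj ih =>
      rw [← ih, ← h j (fun i => if i ∈ s then x i else y i) (x j)]
      congr 1; funext i
      by_cases hij : i = j
      · subst hij; simp
      · simp [update_of_ne hij, hij]
  simpa using this univ
lemma avl_full (hw : ∀ i, IsP (w i)) (f : (ι → α) → ℝ) (x : ι → α) :
    avl w (univ : Finset ι).toList f x = Ex (piw w) f := by
  rw [← Ex_avl hw univ.toList f]
  have : avl w univ.toList f = fun _ => avl w univ.toList f x := by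
    funext y
    exact const_of_update _ (fun i z a => avl_update _ i (by simp) f a z) y x
  rw [this, (IsP.piw hw).const]
end avl
end KKL

section KKL2
open Finset Function

lemma scal {δ t : ℝ} (hδ : 0 < δ) (hδ1 : δ ≤ 1) (ht : 0 ≤ t) (htδ : t ≤ 1 / δ) :
    2 * t^2 * Real.log t - t^2 + 1 ≤ (9 + 4 * Real.log (1/δ)) * (t-1)^2 := by
  have hl : 0 ≤ Real.log (1/δ) := Real.log_nonneg (by rw [le_div_iff₀ hδ]; linarith)
  rcases le_or_gt t 4 with h4 | h4
  · have h1 : 2 * t^2 * Real.log t ≤ 2 * t^2 * (t - 1) := by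
      rcases ht.eq_or_lt with h0 | h0
      · subst h0; simp
      · exact mul_le_mul_of_nonneg_left (Real.log_le_sub_one_of_pos h0) (by positivity)
    have h2 : 0 ≤ 4 * Real.log (1/δ) * (t-1)^2 := by positivity
    nlinarith [mul_nonneg (sub_nonneg.2 h4) (sq_nonneg (t-1))]
  · have h1 : Real.log t ≤ Real.log (1/δ) := Real.log_le_log (by linarith) htδ
    have h0 : 0 ≤ Real.log t := Real.log_nonneg (by linarith)
    have h2 : 2 * t^2 * Real.log t ≤ 4 * (t-1)^2 * Real.log t :=
      mul_le_mul_of_nonneg_right (by nlinarith) h0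
    have h3 : 4 * (t-1)^2 * Real.log t ≤ 4 * (t-1)^2 * Real.log (1/δ) :=
      mul_le_mul_of_nonneg_left h1 (by positivity)
    nlinarith [sq_nonneg (t-1)]

noncomputable def phi (t : ℝ) : ℝ := t * Real.log t

lemma phi_lower {A c : ℝ} (hA : 0 ≤ A) (hc : 0 < c) : A * Real.log c + A - c ≤ phi A := by
  unfold phi
  rcases hA.eq_or_lt with h0 | h0
  · subst h0; simp; exact hc.le
  · have := Real.log_le_sub_one_of_pos (div_pos hc h0)
    rw [Real.log_div hc.ne' h0.ne'] at this
    have h2 := mul_le_mul_of_nonneg_left this hA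
    have h3 : A * (c / A - 1) = c - A := by field_simp
    nlinarith

lemma lsi1 {α : Type*} [Fintype α] {p : α → ℝ} (hp : IsP p) {δ : ℝ} (hδ : 0 < δ)
    (hpd : ∀ a, δ ≤ p a) (g : α → ℝ) (hg : ∀ a, 0 ≤ g a) :
    Ex p (fun a => phi (g a ^ 2)) - phi (Ex p (fun a => g a ^ 2))
      ≤ (9 + 4 * Real.log (1/δ)) * (Ex p (fun a => g a ^ 2) - (Ex p g)^2) := by
  set m := Ex p g with hm
  have hterm : ∀ a, p a * g a ≤ m := fun a =>
    Finset.single_le_sum (f := fun a => p a * g a) (fun b _ => mul_nonneg (hp.nn b) (hg b))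
      (Finset.mem_univ a)
  have hm0 : 0 ≤ m := hp.nonneg hg
  have hdg : ∀ a, δ * g a ≤ m := fun a =>
    (mul_le_mul_of_nonneg_right (hpd a) (hg a)).trans (hterm a)
  rcases hm0.eq_or_lt with h0 | h0
  · have : ∀ a, g a = 0 := fun a => by
      have := hdg a; rw [← h0] at this
      have h2 := hg a
      nlinarith
    simp [this, Ex, phi, ← h0]
  have h1 := phi_lower (A := Ex p (fun a => g a ^ 2)) (c := m^2)
    (hp.nonneg fun a => sq_nonneg _) (by positivity)
  have hδ1 : δ ≤ 1 := by
    by_contra! hcon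
    have hne : Nonempty α := by
      by_contra hne
      rw [not_nonempty_iff] at hne
      have := hp.one
      simp at this
    obtain ⟨a⟩ := hne
    have := Finset.single_le_sum (f := p) (fun b _ => hp.nn b) (Finset.mem_univ a)
    rw [hp.one] at this
    linarith [hpd a]
  have h2 : Ex p (fun a => phi (g a ^ 2) - (Real.log (m^2) + 1) * g a ^2 + m^2)
      ≤ Ex p (fun a => (9 + 4 * Real.log (1/δ)) * (g a ^ 2 - 2 * m * g a + m^2)) := by
    apply hp.mono
    intro a
    have ht : 0 ≤ g a / m := div_nonneg (hg a) h0.le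
    have := scal hδ hδ1 ht (by rw [div_le_div_iff₀ h0 hδ]; linarith [hdg a])
    have h3 := mul_le_mul_of_nonneg_left this (sq_nonneg m)
    have e1 : m^2 * ((9 + 4 * Real.log (1/δ)) * (g a / m-1)^2)
        = (9 + 4 * Real.log (1/δ)) * (g a ^ 2 - 2 * m * g a + m^2) := by
      field_simp; ring
    rw [e1] at h3
    refine le_trans (le_of_eq ?_) h3
    unfold phi
    rcases (hg a).eq_or_lt with hz | hz
    · rw [← hz]; simp
    · rw [Real.log_div hz.ne' h0.ne', Real.log_pow, Real.log_pow]
      push_cast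
      field_simp
      ring
  rw [Ex_add, Ex_sub, Ex_mul, hp.const, Ex_mul, Ex_add, Ex_sub, Ex_mul, hp.const, ← hm] at h2
  nlinarith

variable {ι α : Type*} [Fintype ι] [DecidableEq ι] [Fintype α] {w : ι → α → ℝ}

lemma avl_cs (hw : ∀ i, IsP (w i)) (l : List ι) (g h : (ι → α) → ℝ) (x : ι → α) :
    avl w l (fun y => g y * h y) x
      ≤ Real.sqrt (avl w l (fun y => g y ^ 2) x) * Real.sqrt (avl w l (fun y => h y ^ 2) x) := by
  set A := avl w l (fun y => g y ^ 2) x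
  set B := avl w l (fun y => g y * h y) x
  set C := avl w l (fun y => h y ^ 2) x
  have hA : 0 ≤ A := avl_nonneg hw l (fun y => sq_nonneg _) x
  have key : ∀ t : ℝ, 0 ≤ A * (t * t) + (2 * B) * t + C := by
    intro t
    have := avl_nonneg hw l (f := fun y => (t*t) * g y ^ 2 + (2 * t) * (g y * h y) + h y ^2)
      (fun y => by nlinarith [sq_nonneg (t * g y + h y)]) x
    rw [avl_add, avl_add, avl_mul, avl_mul] at this
    simp only [A, B, C]; linarith
  have := discrim_le_zero key
  unfold discrim at this
  rw [← Real.sqrt_mul hA]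
  apply Real.le_sqrt_of_sq_le
  nlinarith

lemma minkowski (hw : ∀ i, IsP (w i)) (l : List ι) (i : ι) (hi : i ∉ l) (g : (ι → α) → ℝ)
    (x : ι → α) :
    avl w l (fun y => (av w i g y)^2) x
      ≤ (av w i (fun y => Real.sqrt (avl w l (fun z => g z ^ 2) y)) x)^2 := by
  have e1 : (fun y => (av w i g y)^2) = fun y => ∑ a, ∑ b, (w i a * w i b) *
      (g (update y i a) * g (update y i b)) := by
    funext y
    simp only [av, Ex, sq, Finset.sum_mul_sum]
    exact Finset.sum_congr rfl fun a _ => Finset.sum_congr rfl fun b _ => by ring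
  rw [e1, avl_sum _ hw]
  simp only [avl_sum _ hw, avl_mul]
  simp only [av, Ex, sq, Finset.sum_mul_sum]
  refine Finset.sum_le_sum fun a _ => Finset.sum_le_sum fun b _ => ?_
  have := avl_cs hw l (fun y => g (update y i a)) (fun y => g (update y i b)) x
  simp only [avl_subst l i hi]
  simp only [← sq]
  calc _ ≤ (w i a * w i b) * _ := mul_le_mul_of_nonneg_left this
        (mul_nonneg ((hw i).nn _) ((hw i).nn _))
    _ = _ := by ring

lemma av_var (hw : ∀ i, IsP (w i)) (i : ι) (g : (ι → α) → ℝ) :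
    av w i (fun x => (g x - av w i g x)^2)
      = fun x => av w i (fun x => g x ^ 2) x - (av w i g x)^2 := by
  have : (fun x => (g x - av w i g x)^2)
      = fun x => g x ^2 - (2 * (av w i g x * g x) - av w i g x * av w i g x) := by
    funext x; ring
  rw [this, av_sub, av_sub, av_mul, av_pull i g (av w i g) (fun x a => av_update _ _ _ _),
    av_pull i (av w i g) (av w i g) (fun x a => av_update _ _ _ _),
    av_indep hw i (av w i g) (fun x a => av_update _ _ _ _)]
  funext x; ring

lemma lsi_list (hw : ∀ i, IsP (w i)) {δ : ℝ} (hδ : 0 < δ) (hwd : ∀ i a, δ ≤ w i a)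
    (hK : 0 ≤ 9 + 4 * Real.log (1/δ))
    (g : (ι → α) → ℝ) (l : List ι) (hl : l.Nodup) : ∀ x,
    avl w l (fun y => phi (g y ^ 2)) x - phi (avl w l (fun y => g y ^ 2) x)
      ≤ (9 + 4 * Real.log (1/δ)) *
        (l.map (fun j => avl w l (fun y => (g y - av w j g y)^2) x)).sum := by
  induction l with
  | nil => intro x; simp
  | cons i l ih =>
    rw [List.nodup_cons] at hl
    intro x
    have h1 := av_mono hw i (ih hl.2) x
    rw [av_sub, av_mul] at h1
    beta_reduce at h1
    set G : (ι → α) → ℝ := fun y => Real.sqrt (avl w l (fun z => g z ^ 2) y) with hG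
    have hG2 : ∀ y, G y ^ 2 = avl w l (fun z => g z ^ 2) y := fun y =>
      Real.sq_sqrt (avl_nonneg hw l (fun y => sq_nonneg _) y)
    have h2 := lsi1 (hw i) hδ (hwd i) (fun a => G (update x i a)) (fun a => Real.sqrt_nonneg _)
    simp only [hG2] at h2
    have h3 := minkowski hw l i hl.1 g x
    have h4 : avl w (i :: l) (fun y => (g y - av w i g y)^2) x
        = avl w (i :: l) (fun y => g y ^ 2) x - avl w l (fun y => (av w i g y)^2) x := by
      rw [avl_cons, ← avl_av, av_var hw, avl_sub, avl_av]; rfl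
    have h5 : av w i (fun x => (l.map (fun j => avl w l (fun y => (g y - av w j g y)^2) x)).sum) x
        = (l.map (fun j => avl w (i :: l) (fun y => (g y - av w j g y)^2) x)).sum := by
      simp only [avl_cons]
      generalize hL : l = L
      have : ∀ L' : List ι, av w i (fun x => (L'.map (fun j => avl w L (fun y => (g y - av w j g y)^2) x)).sum) x = (L'.map (fun j => av w i (avl w L (fun y => (g y - av w j g y)^2)) x)).sum := by
        intro L'
        induction L' with
        | nil => simp [av_const hw]
        | cons k L' ih => simp only [List.map_cons, List.sum_cons, av_add, ih]
      exact this L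
    rw [h5] at h1
    simp only [List.map_cons, List.sum_cons, h4]
    have h6 : (9 + 4 * Real.log (1/δ)) * (avl w l (fun y => (av w i g y)^2) x)
      ≤ (9 + 4 * Real.log (1/δ)) * (av w i G x)^2 := mul_le_mul_of_nonneg_left h3 hK
    change av w i (fun y => phi (avl w l (fun z => g z ^ 2) y)) x
      - phi (avl w (i::l) (fun z => g z ^ 2) x) ≤
      (9 + 4 * Real.log (1/δ)) * (avl w (i::l) (fun z => g z ^ 2) x - (av w i G x)^2) at h2
    change avl w (i::l) _ x - _ ≤ _ at h1
    nlinarith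

/-- total influence -/
noncomputable def Jt (w : ι → α → ℝ) (f : (ι → α) → ℝ) : ℝ :=
  ∑ j, Ex (piw w) (fun y => (f y - av w j f y)^2)

lemma lsi (hw : ∀ i, IsP (w i)) {δ : ℝ} (hδ : 0 < δ) (hwd : ∀ i a, δ ≤ w i a)
    (hK : 0 ≤ 9 + 4 * Real.log (1/δ)) (hne : Nonempty (ι → α)) (g : (ι → α) → ℝ) :
    Ex (piw w) (fun y => phi (g y ^ 2)) - phi (Ex (piw w) (fun y => g y ^ 2))
      ≤ (9 + 4 * Real.log (1/δ)) * Jt w g := by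
  obtain ⟨x⟩ := hne
  have := lsi_list hw hδ hwd hK g univ.toList (Finset.nodup_toList _) x
  simp only [avl_full hw] at this
  rw [Finset.sum_map_toList] at this
  exact this

lemma ent_lower {Ω : Type*} [Fintype Ω] {p : Ω → ℝ} (hp : IsP p) (g : Ω → ℝ) {s : ℝ}
    (hs : 0 < s) :
    (Real.log s + 1) * Ex p (fun x => g x ^ 2) - s * (Ex p (fun x => |g x|))^2
      ≤ Ex p (fun x => phi (g x ^ 2)) - phi (Ex p (fun x => g x ^ 2)) := by
  set A := Ex p (fun x => g x ^ 2) with hA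
  set B := Ex p (fun x => |g x|) with hB
  have hA0 : 0 ≤ A := hp.nonneg fun x => sq_nonneg _
  have hB0 : 0 ≤ B := hp.nonneg fun x => abs_nonneg _
  rcases hA0.eq_or_lt with h0 | h0
  · have hz : ∀ x, p x * g x ^ 2 = 0 := by
      intro x
      have h1 := (Finset.sum_eq_zero_iff_of_nonneg (f := fun x => p x * g x ^ 2) (s := univ)
        (fun x _ => mul_nonneg (hp.nn x) (sq_nonneg _))).1 h0.symm
      exact h1 x (Finset.mem_univ x)
    have hz2 : Ex p (fun x => phi (g x ^ 2)) = 0 := by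
      unfold Ex phi
      refine Finset.sum_eq_zero fun x _ => ?_
      rw [← mul_assoc, hz, zero_mul]
    rw [hz2, ← h0]
    simp [phi]
    positivity
  · have hBp : 0 < B := by
      rcases hB0.eq_or_lt with h1 | h1
      · exfalso
        have h2 := (Finset.sum_eq_zero_iff_of_nonneg (f := fun x => p x * |g x|) (s := univ)
          (fun x _ => mul_nonneg (hp.nn x) (abs_nonneg _))).1 h1.symm
        have : A = 0 := by
          rw [hA]; unfold Ex
          refine Finset.sum_eq_zero fun x _ => ?_
          have h3 := h2 x (Finset.mem_univ x)
          change p x * g x ^ 2 = 0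
          rw [← sq_abs, sq, ← mul_assoc, h3, zero_mul]
        linarith
      · exact h1
    -- c = A / B
    have h1 : Ex p (fun x => (2 * (1 + Real.log (A/B))) * g x ^ 2 - (2 * (A/B)) * |g x|)
        ≤ Ex p (fun x => phi (g x ^ 2)) := by
      apply hp.mono
      intro x
      have := phi_lower (A := |g x|) (c := A/B) (abs_nonneg _) (by positivity)
      have h2 := mul_le_mul_of_nonneg_left this (abs_nonneg (g x))
      unfold phi at h2 ⊢
      have e : Real.log (g x ^ 2) = 2 * Real.log |g x| := by
        rw [← sq_abs, Real.log_pow]; push_cast; ring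
      rw [e]
      have e2 : |g x| * |g x| = g x ^ 2 := by rw [← sq, sq_abs]
      have e3 : |g x| * (|g x| * Real.log (A / B) + |g x| - A / B)
          = g x ^ 2 * Real.log (A/B) + g x ^ 2 - A / B * |g x| := by rw [← e2]; ring
      have e4 : |g x| * (|g x| * Real.log |g x|) = g x ^ 2 * Real.log |g x| := by
        rw [← e2]; ring
      rw [e3, e4] at h2
      linarith
    rw [Ex_sub, Ex_mul, Ex_mul, ← hA, ← hB] at h1
    have e3 : 2 * (A/B) * B = 2 * A := by field_simp
    rw [e3] at h1
    have hl : Real.log (A/B) = Real.log A - Real.log B := Real.log_div h0.ne' hBp.ne'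
    have h4 := Real.log_le_sub_one_of_pos (show 0 < s * B^2 / A by positivity)
    rw [Real.log_div (by positivity) h0.ne', Real.log_mul hs.ne' (by positivity),
      Real.log_pow] at h4
    have h5 := mul_le_mul_of_nonneg_left h4 hA0
    have e4 : A * (s * B^2/A - 1) = s * B^2 - A := by field_simp
    rw [e4] at h5
    push_cast at h5
    unfold phi at h1 ⊢
    rw [hl] at h1
    nlinarith

lemma pyth (hw : ∀ i, IsP (w i)) (i : ι) (h : (ι → α) → ℝ) :
    Ex (piw w) (fun x => (h x - av w i h x)^2)
      = Ex (piw w) (fun x => h x ^ 2) - Ex (piw w) (fun x => (av w i h x)^2) := by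
  rw [← Ex_av hw i, av_var hw, Ex_sub]
  rw [Ex_av hw]

lemma Jt_pyth (hw : ∀ i, IsP (w i)) (i : ι) (h : (ι → α) → ℝ) :
    Jt w (fun x => h x - av w i h x) = Jt w h - Jt w (av w i h) := by
  unfold Jt
  rw [← Finset.sum_sub_distrib]
  refine Finset.sum_congr rfl fun j _ => ?_
  have := pyth hw i (fun y => h y - av w j h y)
  simp only [av_sub] at this ⊢
  rw [av_comm j i]
  rw [← this]
  congr 1; funext x; ring

lemma Ex_abs_av (hw : ∀ i, IsP (w i)) (i : ι) (h : (ι → α) → ℝ) :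
    Ex (piw w) (fun x => |av w i h x|) ≤ Ex (piw w) (fun x => |h x|) := by
  rw [← Ex_av hw i (fun x => |h x|)]
  apply (IsP.piw hw).mono
  intro x
  rw [abs_le]
  constructor
  · have := av_mono hw i (f := fun y => (-1) * |h y|) (g := h) (fun y => by linarith [neg_abs_le (h y)]) x
    rw [av_mul] at this; linarith
  · exact av_mono hw i (fun y => le_abs_self _) x

lemma Ex_abs_avl (hw : ∀ i, IsP (w i)) (l : List ι) (h : (ι → α) → ℝ) :
    Ex (piw w) (fun x => |avl w l h x|) ≤ Ex (piw w) (fun x => |h x|) := by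
  induction l with
  | nil => exact le_rfl
  | cons i l ih => exact (Ex_abs_av hw i _).trans ih

lemma fs_list (hw : ∀ i, IsP (w i)) {δ : ℝ} (hδ : 0 < δ) (hwd : ∀ i a, δ ≤ w i a)
    (hK : 0 ≤ 9 + 4 * Real.log (1/δ)) (hne : Nonempty (ι → α)) (f : (ι → α) → ℝ) {s : ℝ}
    (hs : 0 < s) (c : ι → ℝ) (hc : ∀ i, Ex (piw w) (fun x => |f x - av w i f x|) ≤ c i)
    (l : List ι) :
    (Real.log s + 1) * (Ex (piw w) (fun x => f x ^ 2) - Ex (piw w) (fun x => avl w l f x ^ 2))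
      - s * (l.map (fun i => c i ^ 2)).sum
      ≤ (9 + 4 * Real.log (1/δ)) * (Jt w f - Jt w (avl w l f)) := by
  induction l with
  | nil => simp
  | cons i l ih =>
    have h1 := ent_lower (IsP.piw hw) (fun x => avl w l f x - av w i (avl w l f) x) hs
    have h2 := lsi hw hδ hwd hK hne (fun x => avl w l f x - av w i (avl w l f) x)
    rw [Jt_pyth hw] at h2
    rw [pyth hw] at h1
    have h3 : Ex (piw w) (fun x => |avl w l f x - av w i (avl w l f) x|) ≤ c i := by
      refine le_trans ?_ (hc i)
      have := Ex_abs_avl hw l (fun x => f x - av w i f x)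
      rw [avl_sub, avl_av] at this
      exact this
    have h4 : (Ex (piw w) (fun x => |avl w l f x - av w i (avl w l f) x|))^2 ≤ c i ^ 2 :=
      pow_le_pow_left₀ ((IsP.piw hw).nonneg fun _ => abs_nonneg _) h3 2
    have h5 := mul_le_mul_of_nonneg_left h4 hs.le
    simp only [avl_cons, List.map_cons, List.sum_cons]
    rw [pyth hw] at h2
    nlinarith

lemma fs (hw : ∀ i, IsP (w i)) {δ : ℝ} (hδ : 0 < δ) (hwd : ∀ i a, δ ≤ w i a)
    (hK : 0 ≤ 9 + 4 * Real.log (1/δ)) (hne : Nonempty (ι → α)) (f : (ι → α) → ℝ) {s : ℝ}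
    (hs : 0 < s) (c : ι → ℝ) (hc : ∀ i, Ex (piw w) (fun x => |f x - av w i f x|) ≤ c i) :
    (Real.log s + 1) * (Ex (piw w) (fun x => f x ^ 2) - (Ex (piw w) f)^2)
      - s * ∑ i, c i ^ 2 ≤ (9 + 4 * Real.log (1/δ)) * Jt w f := by
  have := fs_list hw hδ hwd hK hne f hs c hc univ.toList
  rw [Finset.sum_map_toList] at this
  have e : avl w univ.toList f = fun _ => Ex (piw w) f := by
    funext x; exact avl_full hw f x
  have hJ : Jt w (fun _ : ι → α => Ex (piw w) f) = 0 := by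
    unfold Jt
    simp [av_const hw, Ex]
  rw [e, hJ, (IsP.piw hw).const] at this
  linarith

/-- influence -/
noncomputable def Infl (w : ι → α → ℝ) (f : (ι → α) → ℝ) (i : ι) : ℝ :=
  Ex (piw w) (fun y => (f y - av w i f y)^2)

lemma av01 (hw : ∀ i, IsP (w i)) {f : (ι → α) → ℝ} (hf : ∀ x, f x = 0 ∨ f x = 1) (i : ι) (x) :
    0 ≤ av w i f x ∧ av w i f x ≤ 1 := by
  constructor
  · exact (hw i).nonneg fun a => by rcases hf (update x i a) with h | h <;> simp [h]
  · have := av_mono hw i (f := f) (g := fun _ => 1)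
      (fun y => by rcases hf y with h | h <;> simp [h]) x
    rwa [av_const hw] at this

lemma infl_eq (hw : ∀ i, IsP (w i)) {f : (ι → α) → ℝ} (hf : ∀ x, f x = 0 ∨ f x = 1) (i : ι) :
    Infl w f i = Ex (piw w) (fun x => av w i f x - av w i f x ^ 2) := by
  unfold Infl
  rw [pyth hw, Ex_sub, Ex_av hw]
  congr 2; funext x; rcases hf x with h | h <;> simp [h]

lemma l1_eq (hw : ∀ i, IsP (w i)) {f : (ι → α) → ℝ} (hf : ∀ x, f x = 0 ∨ f x = 1) (i : ι) :
    Ex (piw w) (fun x => |f x - av w i f x|) = 2 * Infl w f i := by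
  have : (fun x => |f x - av w i f x|)
      = fun x => (f x + av w i f x) - 2 * (av w i f x * f x) := by
    funext x
    have := av01 hw hf i x
    rcases hf x with h | h
    · rw [h, zero_sub, abs_neg, abs_of_nonneg this.1]; ring
    · rw [h, abs_of_nonneg (by linarith)]; ring
  rw [this, ← Ex_av hw i, av_sub, av_add, av_mul,
    av_pull i f (av w i f) (fun x a => av_update _ _ _ _),
    av_indep hw i (av w i f) (fun x a => av_update _ _ _ _), infl_eq hw hf, ← Ex_mul]
  congr 1; funext x; ring

lemma kkl (hw : ∀ i, IsP (w i)) {δ : ℝ} (hδ : 0 < δ) (hδ1 : δ ≤ 1) (hwd : ∀ i a, δ ≤ w i a)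
    (hne : Nonempty (ι → α)) {f : (ι → α) → ℝ} (hf : ∀ x, f x = 0 ∨ f x = 1)
    (n : ℕ) (hn : 2 ≤ n) (hcard : Fintype.card ι ≤ n)
    (hV : 0 < Ex (piw w) f * (1 - Ex (piw w) f)) :
    ∃ i, Ex (piw w) f * (1 - Ex (piw w) f) * Real.log n / (4 * (9 + 4 * Real.log (1/δ)) * n)
      ≤ Infl w f i := by
  by_contra! hcon
  set V := Ex (piw w) f * (1 - Ex (piw w) f) with hVd
  set K := 9 + 4 * Real.log (1/δ) with hKd
  have hK : 9 ≤ K := by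
    have : 0 ≤ Real.log (1/δ) := Real.log_nonneg (by rw [le_div_iff₀ hδ]; linarith)
    linarith
  have hn0 : (0:ℝ) < n := by positivity
  have hn1 : (1:ℝ) < n := by exact_mod_cast hn
  have hlog : 0 < Real.log n := Real.log_pos hn1
  set τ := V * Real.log n / (4 * K * n) with hτ
  have hτ0 : 0 < τ := by positivity
  have hI0 : ∀ i, 0 ≤ Infl w f i := fun i => (IsP.piw hw).nonneg fun _ => sq_nonneg _
  have main := fs hw hδ hwd (by linarith) hne f (s := Real.sqrt n) (by positivity)
    (fun i => 2 * Infl w f i) (fun i => (l1_eq hw hf i).le)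
  have e1 : Ex (piw w) (fun x => f x ^ 2) = Ex (piw w) f := by
    congr 1; funext x; rcases hf x with h | h <;> simp [h]
  have hJ : Jt w f ≤ n * τ := by
    calc Jt w f = ∑ i, Infl w f i := rfl
      _ ≤ ∑ i : ι, τ := Finset.sum_le_sum fun i _ => (hcon i).le
      _ = Fintype.card ι * τ := by simp
      _ ≤ n * τ := by gcongr
  have hS : ∑ i, (2 * Infl w f i)^2 ≤ n * (4 * τ^2) := by
    calc ∑ i, (2 * Infl w f i)^2 ≤ ∑ i : ι, 4 * τ^2 := Finset.sum_le_sum fun i _ => by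
          have := pow_le_pow_left₀ (hI0 i) (hcon i).le 2
          nlinarith
      _ = Fintype.card ι * (4 * τ^2) := by simp
      _ ≤ n * (4 * τ^2) := by gcongr
  rw [e1, Real.log_sqrt hn0.le] at main
  have hS2 := mul_le_mul_of_nonneg_left hS (Real.sqrt_nonneg (n:ℝ))
  have hJ2 := mul_le_mul_of_nonneg_left hJ (show 0 ≤ K by linarith)
  have e2 : K * (n * τ) = V * Real.log n / 4 := by rw [hτ]; field_simp
  have hV1 : V ≤ 1 := by nlinarith [sq_nonneg (Ex (piw w) f - 1/2)]
  -- log n ^ 2 ≤ 4 sqrt n * ...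
  have hl4 : Real.log n ≤ 4 * Real.sqrt (Real.sqrt n) := by
    have h0 : 0 < Real.sqrt (Real.sqrt (n:ℝ)) := by positivity
    have := Real.log_le_sub_one_of_pos h0
    rw [Real.log_sqrt (Real.sqrt_nonneg _), Real.log_sqrt hn0.le] at this
    linarith
  have hl2 : Real.log n ^ 2 ≤ 16 * Real.sqrt n := by
    have := pow_le_pow_left₀ hlog.le hl4 2
    rw [mul_pow, Real.sq_sqrt (Real.sqrt_nonneg _)] at this
    linarith
  have e3 : Real.sqrt n * (n * (4 * τ^2)) ≤ V / 2 := by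
    have hsn : Real.sqrt n * Real.sqrt n = n := Real.mul_self_sqrt hn0.le
    have e4 : Real.sqrt n * (n * (4 * τ^2)) = Real.sqrt n * V^2 * Real.log n ^ 2 / (4 * K^2 * n) := by
      rw [hτ]; field_simp
    rw [e4, div_le_iff₀ (by positivity)]
    calc Real.sqrt n * V^2 * Real.log n ^ 2 ≤ Real.sqrt n * V^2 * (16 * Real.sqrt n) := by gcongr
      _ = 16 * V^2 * n := by
        rw [show Real.sqrt n * V^2 * (16 * Real.sqrt n) = 16 * V^2 * (Real.sqrt n * Real.sqrt n) by ring, hsn]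
      _ ≤ V / 2 * (4 * K^2 * n) := by
        have : 16 * V^2 ≤ V / 2 * (4 * K^2) := by
          have : V ^ 2 ≤ V := by nlinarith
          have : 81 ≤ K^2 := by nlinarith
          nlinarith
        nlinarith
  have e5 : Ex (piw w) f - Ex (piw w) f ^ 2 = V := by rw [hVd]; ring
  rw [e5] at main
  nlinarith

end KKL2

section boosting
open Finset Function

open Classical in
/-- indicator that the coalition S can force value b at x -/
noncomputable def ctl {ι α R : Type*} (f : (ι → α) → R) (S : Finset ι) (b : R) (x : ι → α) : ℝ :=
  if ∃ y, (∀ j ∉ S, y j = x j) ∧ f y = b then 1 else 0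

variable {ι α R : Type*}

lemma ctl01 (f : (ι → α) → R) (S : Finset ι) (b : R) (x : ι → α) :
    ctl f S b x = 0 ∨ ctl f S b x = 1 := by
  unfold ctl; split_ifs <;> simp
lemma ctl_nn (f : (ι → α) → R) (S : Finset ι) (b : R) (x : ι → α) : 0 ≤ ctl f S b x := by
  rcases ctl01 f S b x with h | h <;> simp [h]
lemma ctl_le (f : (ι → α) → R) (S : Finset ι) (b : R) (x : ι → α) : ctl f S b x ≤ 1 := by
  rcases ctl01 f S b x with h | h <;> simp [h]
lemma ctl_eq_one {f : (ι → α) → R} {S : Finset ι} {b : R} {x : ι → α} :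
    ctl f S b x = 1 ↔ ∃ y, (∀ j ∉ S, y j = x j) ∧ f y = b := by
  unfold ctl; split_ifs with h <;> simp [h]
lemma ctl_mono (f : (ι → α) → R) {S T : Finset ι} (h : S ⊆ T) (b : R) (x : ι → α) :
    ctl f S b x ≤ ctl f T b x := by
  rcases ctl01 f S b x with h0 | h0
  · rw [h0]; exact ctl_nn _ _ _ _
  · have := ctl_eq_one.1 h0
    obtain ⟨y, hy, hb⟩ := this
    rw [h0, ctl_eq_one.2 ⟨y, fun j hj => hy j (fun hS => hj (h hS)), hb⟩]

variable [Fintype ι] [DecidableEq ι] [Fintype α] {w : ι → α → ℝ}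

lemma gain (hw : ∀ i, IsP (w i)) (f : (ι → α) → R) (S : Finset ι) (b : R) (i : ι) :
    Ex (piw w) (ctl f S b) + Infl w (ctl f S b) i ≤ Ex (piw w) (ctl f (insert i S) b) := by
  rw [infl_eq hw (ctl01 f S b), ← Ex_av hw i (ctl f S b), ← Ex_add]
  apply (IsP.piw hw).mono
  intro x
  have h01 := av01 hw (ctl01 f S b) i x
  by_cases h : ∃ a, ctl f S b (update x i a) = 1
  · obtain ⟨a, ha⟩ := h
    obtain ⟨y, hy, hb⟩ := ctl_eq_one.1 ha
    have : ctl f (insert i S) b x = 1 := ctl_eq_one.2 ⟨y, fun j hj => by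
      rw [Finset.mem_insert, not_or] at hj
      rw [hy j hj.2, update_of_ne hj.1], hb⟩
    rw [this]
    nlinarith [sq_nonneg (1 - av w i (ctl f S b) x)]
  · push Not at h
    have h0 : av w i (ctl f S b) x = 0 := by
      unfold av Ex
      refine Finset.sum_eq_zero fun a _ => ?_
      beta_reduce
      rw [(ctl01 f S b (update x i a)).resolve_right (h a), mul_zero]
    rw [h0]; simpa using ctl_nn _ _ _ _

lemma phase (P : Finset ι → ℝ) {a0 θ γ : ℝ} (hγ : 0 < γ) (hθ : a0 ≤ θ) (S0 : Finset ι)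
    (h0 : a0 ≤ P S0)
    (hstep : ∀ S, a0 ≤ P S → P S < θ → ∃ i, P S + γ ≤ P (insert i S)) :
    ∃ S, (S.card : ℝ) ≤ S0.card + ((θ - a0) / γ + 1) ∧ θ ≤ P S := by
  have key : ∀ T : ℕ, ∃ S : Finset ι, S.card ≤ S0.card + T ∧ a0 ≤ P S ∧
      (θ ≤ P S ∨ a0 + T * γ ≤ P S) := by
    intro T
    induction T with
    | zero => exact ⟨S0, by simp, h0, Or.inr (by simpa using h0)⟩
    | succ T ih =>
      obtain ⟨S, hc, ha, h⟩ := ih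
      by_cases hlt : θ ≤ P S
      · exact ⟨S, by omega, ha, Or.inl hlt⟩
      · obtain ⟨i, hi⟩ := hstep S ha (not_le.1 hlt)
        refine ⟨insert i S, (Finset.card_insert_le _ _).trans (by omega), by linarith, Or.inr ?_⟩
        have := h.resolve_left hlt
        push_cast
        linarith
  obtain ⟨S, hc, ha, h⟩ := key ⌈(θ - a0) / γ⌉₊
  have hnn : 0 ≤ (θ - a0) / γ := div_nonneg (by linarith) hγ.le
  refine ⟨S, ?_, ?_⟩
  · have h1 : (S.card : ℝ) ≤ S0.card + (⌈(θ - a0) / γ⌉₊ : ℝ) := by exact_mod_cast hc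
    have h2 := Nat.ceil_lt_add_one hnn
    linarith
  · rcases h with h | h
    · exact h
    · have h2 := Nat.le_ceil ((θ - a0) / γ)
      have h3 := mul_le_mul_of_nonneg_right h2 hγ.le
      rw [div_mul_cancel₀ _ hγ.ne'] at h3
      linarith

lemma boost (hw : ∀ i, IsP (w i)) {δ : ℝ} (hδ : 0 < δ) (hδ1 : δ ≤ 1) (hwd : ∀ i a, δ ≤ w i a)
    (hne : Nonempty (ι → α)) (f : (ι → α) → R) (b : R)
    (n : ℕ) (hn : 2 ≤ n) (hcard : Fintype.card ι ≤ n) {r η Λ : ℝ} (hr : 2 ≤ r)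
    (hη : 0 < η) (hη2 : η ≤ 1/2)
    (hΛ : Λ = Real.log n / (4 * (9 + 4 * Real.log (1/δ)) * n))
    (hstart : 1 / r ≤ Ex (piw w) (ctl f ∅ b)) :
    ∃ S : Finset ι, (S.card : ℝ) ≤ (r + 1/η) / Λ + 2 ∧ 1 - η ≤ Ex (piw w) (ctl f S b) := by
  have hl : 0 ≤ Real.log (1/δ) := Real.log_nonneg (by rw [le_div_iff₀ hδ]; linarith)
  have hn1 : (1:ℝ) < n := by exact_mod_cast hn
  have hlog : 0 < Real.log n := Real.log_pos hn1
  have hΛ0 : 0 < Λ := by rw [hΛ]; positivity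
  have step : ∀ S v, 0 < v → v ≤ Ex (piw w) (ctl f S b) * (1 - Ex (piw w) (ctl f S b)) →
      ∃ i, Ex (piw w) (ctl f S b) + v * Λ ≤ Ex (piw w) (ctl f (insert i S) b) := by
    intro S v hv0 hv
    obtain ⟨i, hi⟩ := kkl hw hδ hδ1 hwd hne (ctl01 f S b) n hn hcard (by linarith)
    refine ⟨i, le_trans ?_ (gain hw f S b i)⟩
    rw [mul_div_assoc, ← hΛ] at hi
    have := mul_le_mul_of_nonneg_right hv hΛ0.le
    linarith
  have hr0 : 0 < r := by linarith
  have hr2 : 1 / r ≤ 1/2 := one_div_le_one_div_of_le (by norm_num) hr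
  obtain ⟨S1, hc1, hP1⟩ := phase (fun S => Ex (piw w) (ctl f S b)) (a0 := 1/r) (θ := 1/2)
    (γ := 1/(2*r) * Λ) (by positivity) hr2 ∅ hstart (by
      intro S h1 h2
      apply step S _ (by positivity)
      have e : 1/(2*r) = 1/r * (1/2) := by field_simp
      rw [e]
      have : 0 < 1/r := by positivity
      apply mul_le_mul h1 (by linarith) (by norm_num) (by linarith))
  obtain ⟨S2, hc2, hP2⟩ := phase (fun S => Ex (piw w) (ctl f S b)) (a0 := 1/2) (θ := 1-η)
    (γ := η/2 * Λ) (by positivity) (by linarith) S1 hP1 (by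
      intro S h1 h2
      apply step S _ (by positivity)
      nlinarith)
  refine ⟨S2, ?_, hP2⟩
  have e1 : (1/2 - 1/r) / (1/(2*r) * Λ) ≤ r / Λ := by
    rw [div_le_div_iff₀ (by positivity) hΛ0]
    have : r * (1 / (2*r) * Λ) = 1/2 * Λ := by field_simp
    rw [this]
    have : 0 ≤ 1/r := by positivity
    nlinarith
  have e2 : (1 - η - 1/2) / (η/2 * Λ) ≤ (1/η) / Λ := by
    rw [div_le_div_iff₀ (by positivity) hΛ0]
    have : 1/η * (η/2 * Λ) = 1/2 * Λ := by field_simp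
    rw [this]
    nlinarith
  rw [add_div]
  simp only [Finset.card_empty, Nat.cast_zero, zero_add] at hc1
  linarith
end boosting

section rare
open Finset Function

variable {κ R : Type*} [Fintype κ] [DecidableEq κ] [Fintype R] [DecidableEq R]

def supp (r : κ → Bool) (z : κ → Bool) : Finset κ := univ.filter (fun i => z i = r i)

def SY {k : ℕ} (r : κ → Bool) (B : Finset R) (Y : R → Fin k → κ → Bool) : Finset κ :=
  B.biUnion fun b => univ.biUnion fun j => supp r (Y b j)

def SW {L k : ℕ} (r : κ → Bool) (W : Fin L → R → Fin k → κ → Bool) : Finset κ :=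
  univ.biUnion fun l => SY r univ (W l)

lemma rare_one {w : κ → Bool → ℝ} (hw : ∀ i, IsP (w i)) (r : κ → Bool) (k : ℕ)
    (hR : 0 < Fintype.card R) (f : (κ → Bool) → R) :
    ∃ b, 1 / (Fintype.card R : ℝ) ≤ Ex (piw fun _ : R => piw fun _ : Fin k => piw w)
      (fun Y => (Ex (piw w) (ctl f (SY r univ Y) b))^k) := by
  by_contra! hcon
  have hP0 := IsP.piw hw
  have hP1 : IsP (piw fun _ : Fin k => piw w) := IsP.piw fun _ => hP0
  have hP2 : IsP (piw fun _ : R => piw fun _ : Fin k => piw w) := IsP.piw fun _ => hP1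
  set pY := piw fun _ : R => piw fun _ : Fin k => piw w with hpY
  have h1 : ∀ b, Ex pY (fun Y => ∏ j, ctl f (SY r (univ.erase b) Y) b (Y b j))
      < 1 / (Fintype.card R : ℝ) := by
    intro b
    refine lt_of_le_of_lt ?_ (hcon b)
    rw [hpY, ← Ex_av (fun _ => hP1) b]
    apply hP2.mono
    intro Y
    unfold av
    have e : ∀ v, SY r (univ.erase b) (update Y b v) = SY r (univ.erase b) Y := by
      intro v
      unfold SY
      refine Finset.biUnion_congr rfl fun c hc => ?_
      rw [update_of_ne (Finset.ne_of_mem_erase hc)]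
    simp only [e, update_self]
    rw [Ex_prod (fun _ : Fin k => piw w) (fun _ z => ctl f (SY r (univ.erase b) Y) b z)]
    simp only [Finset.prod_const, Finset.card_univ, Fintype.card_fin]
    apply pow_le_pow_left₀ (hP0.nonneg fun x => ctl_nn _ _ _ _)
    apply hP0.mono
    intro x
    exact ctl_mono f (Finset.biUnion_subset_biUnion_of_subset_left _ (Finset.erase_subset _ _)) b x
  have h2 : Ex pY (fun Y => ∑ b, ∏ j, ctl f (SY r (univ.erase b) Y) b (Y b j)) < 1 := by
    rw [Ex_sum]
    have hne : (univ : Finset R).Nonempty := by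
      rw [← Finset.card_pos]; exact hR
    calc _ < ∑ b : R, 1 / (Fintype.card R : ℝ) := Finset.sum_lt_sum_of_nonempty hne fun b _ => h1 b
      _ = 1 := by
        simp only [Finset.sum_const, Finset.card_univ, nsmul_eq_mul]
        have : (0:ℝ) < Fintype.card R := by exact_mod_cast hR
        field_simp
  obtain ⟨Y, hY⟩ := hP2.exists_le le_rfl (f := (fun Y => ∑ b, ∏ j, ctl f (SY r (univ.erase b) Y) b (Y b j)))
  have hY' := lt_of_le_of_lt hY h2
  have h3 : ∀ b, ∃ j, ctl f (SY r (univ.erase b) Y) b (Y b j) ≠ 1 := by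
    intro b
    by_contra! hall
    have h4 := Finset.single_le_sum (f := fun b => ∏ j, ctl f (SY r (univ.erase b) Y) b (Y b j))
      (fun b _ => Finset.prod_nonneg fun j _ => ctl_nn _ _ _ _) (Finset.mem_univ b)
    simp only [hall, Finset.prod_const_one] at h4
    linarith
  choose J hJ using h3
  classical
  let y : κ → Bool := fun i => if ∃ b, Y b (J b) i = r i then r i else !(r i)
  apply hJ (f y)
  rw [ctl_eq_one]
  refine ⟨y, fun i hi => ?_, rfl⟩
  by_cases hz : Y (f y) (J (f y)) i = r i
  · rw [hz]; simp only [y]; rw [if_pos ⟨f y, hz⟩]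
  · have : ¬ ∃ b, Y b (J b) i = r i := by
      rintro ⟨b, hb⟩
      by_cases hbf : b = f y
      · rw [hbf] at hb; exact hz hb
      · apply hi
        unfold SY
        simp only [Finset.mem_biUnion]
        exact ⟨b, by simp [hbf], J b, Finset.mem_univ _, by simp [supp, hb]⟩
    have e : y i = !(r i) := by simp only [y]; rw [if_neg this]
    rw [e]
    revert hz
    cases Y (f y) (J (f y)) i <;> cases r i <;> simp

lemma rare_amp {w : κ → Bool → ℝ} (hw : ∀ i, IsP (w i)) (r : κ → Bool) (k L : ℕ) {ε : ℝ}
    (hε : 0 < ε) (hε1 : ε ≤ 1)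
    (hR : 0 < Fintype.card R) (hL : 2 * (1 - 1 / (Fintype.card R : ℝ))^L ≤ ε / 2)
    (hk : 1/2 ≤ (1 - (1 - ε/2)^k)^L) (f : (κ → Bool) → R) :
    ∃ b, Ex (piw fun _ : Fin L => piw fun _ : R => piw fun _ : Fin k => piw w)
      (fun W => 1 - Ex (piw w) (ctl f (SW r W) b)) ≤ ε := by
  obtain ⟨b, hb⟩ := rare_one hw r k hR f
  refine ⟨b, ?_⟩
  have hP0 := IsP.piw hw
  have hP1 : IsP (piw fun _ : Fin k => piw w) := IsP.piw fun _ => hP0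
  have hP2 : IsP (piw fun _ : R => piw fun _ : Fin k => piw w) := IsP.piw fun _ => hP1
  have hP3 : IsP (piw fun _ : Fin L => piw fun _ : R => piw fun _ : Fin k => piw w) :=
    IsP.piw fun _ => hP2
  set u : Finset κ → ℝ := fun S => Ex (piw w) (ctl f S b) with hu
  have u0 : ∀ S, 0 ≤ u S := fun S => hP0.nonneg fun x => ctl_nn _ _ _ _
  have u1 : ∀ S, u S ≤ 1 := fun S => by
    have := hP0.mono (fun x => ctl_le f S b x)
    rwa [hP0.const] at this
  have umono : ∀ S T, S ⊆ T → u S ≤ u T := fun S T h => hP0.mono fun x => ctl_mono f h b x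
  have h1 : Ex (piw fun _ : Fin L => piw fun _ : R => piw fun _ : Fin k => piw w)
      (fun W => 1 - u (SW r W)) ≤ Ex (piw fun _ : Fin L => piw fun _ : R => piw fun _ : Fin k => piw w)
      (fun W => ε/2 + 2 * ∏ l, (1 - u (SY r univ (W l)) ^ k)) := by
    apply hP3.mono
    intro W
    have hfac : ∀ l, 0 ≤ 1 - u (SY r univ (W l)) ^ k := fun l =>
      sub_nonneg.2 (pow_le_one₀ (u0 _) (u1 _))
    by_cases hbig : 1 - ε/2 ≤ u (SW r W)
    · have : 0 ≤ ∏ l, (1 - u (SY r univ (W l)) ^ k) := Finset.prod_nonneg fun l _ => hfac l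
      linarith
    · push Not at hbig
      have : (1 - (1 - ε/2)^k)^L ≤ ∏ l, (1 - u (SY r univ (W l)) ^ k) := by
        calc (1 - (1 - ε/2)^k)^L = ∏ l : Fin L, (1 - (1 - ε/2)^k) := by simp
          _ ≤ _ := by
            apply Finset.prod_le_prod
            · intro l _; exact sub_nonneg.2 (pow_le_one₀ (by linarith) (by linarith))
            · intro l _
              have h2 : u (SY r univ (W l)) ≤ 1 - ε/2 :=
                (umono _ _ (Finset.subset_biUnion_of_mem (fun l => SY r univ (W l))
                  (Finset.mem_univ l))).trans hbig.le
              have := pow_le_pow_left₀ (u0 _) h2 k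
              linarith
      have := u0 (SW r W)
      linarith
  refine h1.trans ?_
  rw [Ex_add, hP3.const, Ex_mul,
    Ex_prod (fun _ : Fin L => piw fun _ : R => piw fun _ : Fin k => piw w)
      (fun _ Y => 1 - u (SY r univ Y) ^ k)]
  rw [Ex_sub, hP2.const]
  simp only [Finset.prod_const, Finset.card_univ, Fintype.card_fin]
  have h0 : 0 ≤ 1 - Ex (piw fun _ : R => piw fun _ : Fin k => piw w)
      (fun Y => u (SY r univ Y) ^ k) := by
    have := hP2.mono (f := fun Y => u (SY r univ Y) ^ k) (g := fun _ => 1)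
      (fun Y => pow_le_one₀ (u0 _) (u1 _))
    rw [hP2.const] at this
    linarith
  have := pow_le_pow_left₀ h0 (sub_le_sub_left hb 1) L
  linarith

lemma Ex_marg {ι α : Type*} [Fintype ι] [DecidableEq ι] [Fintype α] {w : ι → α → ℝ}
    (hw : ∀ i, IsP (w i)) (i : ι) (h : α → ℝ) :
    Ex (piw w) (fun x => h (x i)) = Ex (w i) h := by
  rw [← Ex_av hw i]
  have : av w i (fun x => h (x i)) = fun _ => Ex (w i) h := by
    funext x; simp [av]
  rw [this, (IsP.piw hw).const]

lemma rare_size {w : κ → Bool → ℝ} (hw : ∀ i, IsP (w i)) (r : κ → Bool) (k L : ℕ) {δ : ℝ}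
    (hr : ∀ i, w i (r i) ≤ δ) :
    Ex (piw fun _ : Fin L => piw fun _ : R => piw fun _ : Fin k => piw w)
      (fun W => ((SW r W).card : ℝ)) ≤ L * Fintype.card R * k * (δ * Fintype.card κ) := by
  have hP0 := IsP.piw hw
  have hP1 : IsP (piw fun _ : Fin k => piw w) := IsP.piw fun _ => hP0
  have hP2 : IsP (piw fun _ : R => piw fun _ : Fin k => piw w) := IsP.piw fun _ => hP1
  have hP3 : IsP (piw fun _ : Fin L => piw fun _ : R => piw fun _ : Fin k => piw w) :=
    IsP.piw fun _ => hP2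
  have hs : Ex (piw w) (fun z => ((supp r z).card : ℝ)) ≤ δ * Fintype.card κ := by
    have e : (fun z : κ → Bool => ((supp r z).card : ℝ))
        = fun z => ∑ i, (if z i = r i then (1:ℝ) else 0) := by
      funext z; simp [supp]
    rw [e, Ex_sum]
    calc _ = ∑ i, w i (r i) := Finset.sum_congr rfl fun i _ => by
          rw [Ex_marg hw i (fun a => if a = r i then (1:ℝ) else 0)]
          simp [Ex]
      _ ≤ ∑ i : κ, δ := Finset.sum_le_sum fun i _ => hr i
      _ = _ := by simp [mul_comm]
  calc _ ≤ Ex (piw fun _ : Fin L => piw fun _ : R => piw fun _ : Fin k => piw w)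
          (fun W => ∑ l, ∑ b, ∑ j, ((supp r (W l b j)).card : ℝ)) := by
        apply hP3.mono
        intro W
        have : (SW r W).card ≤ ∑ l, ∑ b, ∑ j, (supp r (W l b j)).card :=
          Finset.card_biUnion_le.trans (Finset.sum_le_sum fun l _ =>
            Finset.card_biUnion_le.trans (Finset.sum_le_sum fun b _ => Finset.card_biUnion_le))
        exact_mod_cast this
    _ = ∑ l : Fin L, ∑ b : R, ∑ j : Fin k, Ex (piw w) (fun z => ((supp r z).card : ℝ)) := by
        rw [Ex_sum]; refine Finset.sum_congr rfl fun l _ => ?_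
        rw [Ex_sum]; refine Finset.sum_congr rfl fun b _ => ?_
        rw [Ex_sum]; refine Finset.sum_congr rfl fun j _ => ?_
        rw [Ex_marg (fun _ => hP2) l (fun Y => ((supp r (Y b j)).card : ℝ)),
          Ex_marg (fun _ => hP1) b (fun Y => ((supp r (Y j)).card : ℝ)),
          Ex_marg (fun _ => hP0) j (fun Y => ((supp r Y).card : ℝ))]
    _ ≤ ∑ l : Fin L, ∑ b : R, ∑ j : Fin k, δ * Fintype.card κ :=
        Finset.sum_le_sum fun l _ => Finset.sum_le_sum fun b _ => Finset.sum_le_sum fun j _ => hs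
    _ = _ := by simp; ring
end rare

section comb
open Finset Function

lemma Ex_split {ι : Type*} [Fintype ι] [DecidableEq ι] (P : ι → Prop) [DecidablePred P]
    (w : ι → Bool → ℝ) (g : (ι → Bool) → ℝ) :
    Ex (piw w) g = Ex (piw fun i : {i // P i} => w i) (fun u =>
      Ex (piw fun i : {i // ¬ P i} => w i) fun v =>
        g ((Equiv.piEquivPiSubtypeProd P (fun _ => Bool)).symm (u, v))) := by
  have : Ex (piw w) g = ∑ z : ({i // P i} → Bool) × ({i // ¬ P i} → Bool),
      piw w ((Equiv.piEquivPiSubtypeProd P (fun _ => Bool)).symm z) *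
        g ((Equiv.piEquivPiSubtypeProd P (fun _ => Bool)).symm z) :=
    (Equiv.sum_comp (Equiv.piEquivPiSubtypeProd P (fun _ => Bool)).symm
      (fun x => piw w x * g x)).symm
  rw [this, Fintype.sum_prod_type]
  simp only [Ex, Finset.mul_sum]
  refine Finset.sum_congr rfl fun u _ => Finset.sum_congr rfl fun v _ => ?_
  rw [← mul_assoc]
  congr 1
  unfold piw
  rw [← Fintype.prod_subtype_mul_prod_subtype P]
  congr 1
  · exact Finset.prod_congr rfl fun i _ => by
      simp [Equiv.piEquivPiSubtypeProd, i.2]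
  · exact Finset.prod_congr rfl fun i _ => by
      simp [Equiv.piEquivPiSubtypeProd, i.2]

lemma combine {R : Type*} [Fintype R] [DecidableEq R] (n : ℕ) (hn : 2 ≤ n)
    {w : Fin n → Bool → ℝ} (hw : ∀ i, IsP (w i)) {δ : ℝ} (hδ : 0 < δ) (hδ1 : δ ≤ 1)
    {ε : ℝ} (hε : 0 < ε) (hε1 : ε ≤ 1/2) (hR : 2 ≤ Fintype.card R) (k L : ℕ)
    (hL : 2 * (1 - 1 / (Fintype.card R : ℝ))^L ≤ ε / 4 / 2)
    (hk : 1/2 ≤ (1 - (1 - ε/4/2)^k)^L) {B : ℝ} (hB : 0 < B)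
    (hB2 : L * Fintype.card R * k * (δ * n) ≤ B) (f : (Fin n → Bool) → R) :
    ∃ (b : R) (S : Finset (Fin n)),
      (S.card : ℝ) ≤ (Fintype.card R + 2/ε) / (Real.log n / (4 * (9 + 4 * Real.log (1/δ)) * n))
        + 2 + 4 * B ∧ 1 - ε ≤ Ex (piw w) (ctl f S b) := by
  classical
  set P : Fin n → Prop := fun i => ∀ a, δ ≤ w i a with hP
  set gl := (Equiv.piEquivPiSubtypeProd P (fun _ => Bool)).symm with hgl
  have gl1 : ∀ u v (i : Fin n) (h : P i), gl (u, v) i = u ⟨i, h⟩ := by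
    intro u v i h; simp [hgl, Equiv.piEquivPiSubtypeProd, h]
  have gl2 : ∀ u v (i : Fin n) (h : ¬ P i), gl (u, v) i = v ⟨i, h⟩ := by
    intro u v i h; simp [hgl, Equiv.piEquivPiSubtypeProd, h]
  set wM : {i // P i} → Bool → ℝ := fun i => w i with hwM
  set wH : {i // ¬ P i} → Bool → ℝ := fun i => w i with hwH
  have hM : ∀ i, IsP (wM i) := fun i => hw i
  have hH : ∀ i, IsP (wH i) := fun i => hw i
  have hr : ∀ i : {i // ¬ P i}, ∃ a, wH i a ≤ δ := by
    intro i
    have := i.2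
    simp only [hP, not_forall, not_le] at this
    obtain ⟨a, ha⟩ := this
    exact ⟨a, ha.le⟩
  choose r hr using hr
  have hamp := fun u : {i // P i} → Bool =>
    rare_amp (R := R) hH r k L (ε := ε/4) (by linarith) (by linarith) (by omega) hL hk
      (fun v => f (gl (u, v)))
  choose F hF using hamp
  have hPM := IsP.piw hM
  have hPH := IsP.piw hH
  set pW := piw fun _ : Fin L => piw fun _ : R => piw fun _ : Fin k => piw wH with hpW
  have hPW : IsP pW := IsP.piw fun _ => IsP.piw fun _ => IsP.piw fun _ => hPH
  have hR2 : (2:ℝ) ≤ Fintype.card R := by exact_mod_cast hR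
  -- popular value
  have hpop : ∃ b, 1 / (Fintype.card R : ℝ) ≤ Ex (piw wM) (ctl F ∅ b) := by
    have hs : ∑ b : R, 1 / (Fintype.card R : ℝ) ≤ ∑ b : R, Ex (piw wM) (ctl F ∅ b) := by
      rw [← Ex_sum]
      have e : (fun u => ∑ b : R, ctl F ∅ b u) = fun _ => (1:ℝ) := by
        funext u
        have : ∀ b, ctl F ∅ b u = if F u = b then 1 else 0 := by
          intro b
          unfold ctl
          congr 1
          simp only [Finset.notMem_empty, not_false_eq_true, forall_true_left, eq_iff_iff]
          constructor
          · rintro ⟨y, hy, hb⟩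
            rwa [show y = u from funext hy] at hb
          · intro h; exact ⟨u, fun _ => rfl, h⟩
        simp [this]
      rw [e, hPM.const]
      simp only [Finset.sum_const, Finset.card_univ, nsmul_eq_mul]
      rw [mul_one_div_cancel (by linarith)]
    have hne : (univ : Finset R).Nonempty := by
      rw [← Finset.card_pos]; change 0 < Fintype.card R; omega
    obtain ⟨b, _, hb⟩ := Finset.exists_le_of_sum_le hne hs
    exact ⟨b, hb⟩
  obtain ⟨b, hb⟩ := hpop
  have hcM : Fintype.card {i // P i} ≤ n := by
    have := Fintype.card_subtype_le P; simpa using this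
  have hcH : Fintype.card {i // ¬ P i} ≤ n := by
    have := Fintype.card_subtype_le (fun i => ¬ P i); simpa using this
  obtain ⟨SM, hSM, hSM2⟩ := boost hM hδ hδ1 (fun i a => i.2 a) ⟨fun _ => true⟩ F b n hn hcM
    hR2 (η := ε/2) (by linarith) (by linarith) rfl hb
  refine ⟨b, ?_⟩
  let S : (Fin L → R → Fin k → {i // ¬ P i} → Bool) → Finset (Fin n) := fun W =>
    SM.map (Embedding.subtype _) ∪ (SW r W).map (Embedding.subtype _)
  have hS1 : ∀ W i (h : P i), i ∉ S W → (⟨i, h⟩ : {i // P i}) ∉ SM := by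
    intro W i h hi hc
    exact hi (Finset.mem_union_left _ (Finset.mem_map.2 ⟨⟨i, h⟩, hc, rfl⟩))
  have hS2 : ∀ W i (h : ¬ P i), i ∉ S W → (⟨i, h⟩ : {i // ¬ P i}) ∉ SW r W := by
    intro W i h hi hc
    exact hi (Finset.mem_union_right _ (Finset.mem_map.2 ⟨⟨i, h⟩, hc, rfl⟩))
  have hSc : ∀ W, ((S W).card : ℝ) ≤ SM.card + (SW r W).card := by
    intro W
    have : (S W).card ≤ SM.card + (SW r W).card := by
      refine (Finset.card_union_le _ _).trans ?_
      simp
    exact_mod_cast this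
  have hX : Ex pW (fun W => 1 - Ex (piw w) (ctl f (S W) b)) ≤ ε/2 + ε/4 := by
    have e : ∀ W, 1 - Ex (piw w) (ctl f (S W) b)
        = Ex (piw wM) (fun u => 1 - Ex (piw wH) (fun v => ctl f (S W) b (gl (u, v)))) := by
      intro W
      rw [Ex_split P w, Ex_sub, hPM.const]
    simp only [e]
    rw [Ex_comm]
    calc _ ≤ Ex (piw wM) (fun u => (1 - ctl F SM b u) + ε/4) := by
          apply hPM.mono
          intro u
          rcases ctl01 F SM b u with h | h
          · have : Ex pW (fun W => 1 - Ex (piw wH) (fun v => ctl f (S W) b (gl (u, v))))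
                ≤ Ex pW (fun _ => 1) := hPW.mono fun W => by
              have := hPH.nonneg (f := fun v => ctl f (S W) b (gl (u, v)))
                (fun v => ctl_nn _ _ _ _)
              linarith
            rw [hPW.const] at this
            rw [h]; linarith
          · rw [h]
            obtain ⟨y, hy, hyb⟩ := ctl_eq_one.1 h
            have h1 := hF y
            rw [hyb] at h1
            have : Ex pW (fun W => 1 - Ex (piw wH) (fun v => ctl f (S W) b (gl (u, v))))
                ≤ Ex pW (fun W => 1 - Ex (piw wH) (ctl (fun v => f (gl (y, v))) (SW r W) b)) := by
              apply hPW.mono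
              intro W
              apply sub_le_sub_left
              apply hPH.mono
              intro v
              rcases ctl01 (fun v => f (gl (y, v))) (SW r W) b v with h2 | h2
              · rw [h2]; exact ctl_nn _ _ _ _
              · rw [h2]
                obtain ⟨v', hv', hvb⟩ := ctl_eq_one.1 h2
                refine (ctl_eq_one.2 ⟨gl (y, v'), fun i hi => ?_, hvb⟩).ge
                by_cases hPi : P i
                · rw [gl1 _ _ _ hPi, gl1 _ _ _ hPi]; exact hy _ (hS1 W i hPi hi)
                · rw [gl2 _ _ _ hPi, gl2 _ _ _ hPi]; exact hv' _ (hS2 W i hPi hi)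
            linarith
      _ ≤ ε/2 + ε/4 := by
          rw [Ex_add, Ex_sub, hPM.const, hPM.const]
          linarith
  have hsz := rare_size (R := R) hH r k L hr
  have hsz2 : Ex pW (fun W => ((SW r W).card : ℝ)) ≤ B := by
    refine hsz.trans (le_trans ?_ hB2)
    gcongr
  have hfin : Ex pW (fun W => (1 - Ex (piw w) (ctl f (S W) b))
      + ε / (4 * B) * ((SW r W).card : ℝ)) ≤ ε := by
    rw [Ex_add, Ex_mul]
    have := mul_le_mul_of_nonneg_left hsz2 (show 0 ≤ ε / (4 * B) by positivity)
    have e : ε / (4 * B) * B = ε/4 := by field_simp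
    linarith
  obtain ⟨W, hW⟩ := hPW.exists_le hfin
  have hx1 : 0 ≤ 1 - Ex (piw w) (ctl f (S W) b) := by
    have := (IsP.piw hw).mono (fun x => ctl_le f (S W) b x)
    rw [(IsP.piw hw).const] at this
    linarith
  have hx2 : 0 ≤ ε / (4 * B) * ((SW r W).card : ℝ) := by positivity
  refine ⟨S W, ?_, by linarith⟩
  have h3 : ((SW r W).card : ℝ) ≤ 4 * B := by
    have : ε / (4 * B) * ((SW r W).card : ℝ) ≤ ε := by linarith
    rw [div_mul_eq_mul_div, div_le_iff₀ (by positivity)] at this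
    exact le_of_mul_le_mul_left this hε
  have := hSc W
  have e : 1 / (ε/2) = 2/ε := by field_simp
  rw [e] at hSM
  linarith


lemma infl_Ex {n : ℕ} {R : Type*} (μs : Fin n → Measure Bool) (hμ : ∀ i, IsProbabilityMeasure (μs i))
    (f : (Fin n → Bool) → R) (S : Finset (Fin n)) (b : R) :
    infl (Measure.pi μs) f S b = Ex (piw fun i a => (μs i {a}).toReal) (ctl f S b) := by
  classical
  unfold infl Ex ctl piw
  set A : Set (Fin n → Bool) := {x | ∃ y, (∀ j ∉ S, y j = x j) ∧ f y = b} with hA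
  have h1 : (Measure.pi μs) A = ∑ x ∈ A.toFinset, Measure.pi μs {x} := by
    rw [MeasureTheory.sum_measure_singleton]; simp
  rw [h1, ENNReal.toReal_sum (fun x _ => measure_ne_top _ _)]
  simp only [Measure.pi_singleton, ENNReal.toReal_prod]
  simp only [mul_ite, mul_one, mul_zero]
  rw [← Finset.sum_filter]
  apply Finset.sum_congr _ (fun _ _ => rfl)
  ext x; simp [hA]

lemma isP_of (μ : Measure Bool) [IsProbabilityMeasure μ] : IsP (fun a => (μ {a}).toReal) := by
  refine ⟨fun _ => ENNReal.toReal_nonneg, ?_⟩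
  rw [← ENNReal.toReal_sum (fun x _ => measure_ne_top _ _), MeasureTheory.sum_measure_singleton,
    Finset.coe_univ, measure_univ, ENNReal.toReal_one]

lemma exists_kL (r : ℕ) (hr : 2 ≤ r) {ε : ℝ} (hε : 0 < ε) (hε1 : ε ≤ 1/2) :
    ∃ k L : ℕ, 2 * (1 - 1 / (r : ℝ))^L ≤ ε / 4 / 2 ∧ 1/2 ≤ (1 - (1 - ε/4/2)^k)^L := by
  have hr2 : (2:ℝ) ≤ r := by exact_mod_cast hr
  have hr0 : 1 / (r:ℝ) ≤ 1/2 := one_div_le_one_div_of_le (by norm_num) hr2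
  have hr1 : 0 < 1 / (r:ℝ) := by positivity
  obtain ⟨L, hL⟩ := exists_pow_lt_of_lt_one (show 0 < ε/4/2/2 by positivity)
    (show 1 - 1/(r:ℝ) < 1 by linarith)
  obtain ⟨k, hk⟩ := exists_pow_lt_of_lt_one (show 0 < 1/(2 * ((L:ℝ)+1)) by positivity)
    (show 1 - ε/4/2 < 1 by linarith)
  refine ⟨k, L, by linarith, ?_⟩
  have h0 : 0 ≤ (1 - ε/4/2)^k := pow_nonneg (by linarith) k
  have h1 : (1 - ε/4/2)^k ≤ 1 := pow_le_one₀ (by linarith) (by linarith)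
  have hb := one_add_mul_le_pow (show (-2:ℝ) ≤ -(1 - ε/4/2)^k by linarith) L
  rw [lt_div_iff₀ (by positivity)] at hk
  have e : 1 + -(1 - ε/4/2)^k = 1 - (1 - ε/4/2)^k := by ring
  rw [e] at hb
  nlinarith

end comb

set_option maxHeartbeats 1000000 in
/-- single round, general range: for a finite range `R` with `|R| ≥ 2`, setting
`m = ⌈log |R|⌉` and `C = C'·(m³·log(m/ε)/ε² + 1/ε + 2^m)`, for all sufficiently large `n`
(depending on `ε` and `|R|`), over any product measure on `{0,1}^n` any `f : {0,1}^n → R`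
can be biased towards some `b ∈ R` by a coalition of at most `C·n·loglog n/log n` players. -/
theorem single_round_general_range :
    ∃ C' : ℝ, C' > 0 ∧
      ∀ ε : ℝ, 0 < ε → ε ≤ 1/2 →
      ∀ cardR : ℕ, 2 ≤ cardR →
      ∃ n₀ : ℕ, ∀ n : ℕ, n₀ ≤ n →
      ∀ (R : Type), ∀ (_ : Fintype R), Fintype.card R = cardR →
      ∀ μs : Fin n → Measure Bool, (∀ i, IsProbabilityMeasure (μs i)) →
      ∀ f : (Fin n → Bool) → R,
      ∀ m : ℕ, m = ⌈Real.logb 2 (cardR : ℝ)⌉₊ →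
      ∀ C : ℝ, C = C' * ((m : ℝ)^3 * Real.logb 2 ((m : ℝ)/ε) / ε^2 + 1/ε + 2^m) →
      ∃ (b : R) (S : Finset (Fin n)),
        (S.card : ℝ) ≤ C * n * Real.logb 2 (Real.logb 2 n) / Real.logb 2 n ∧
        infl (Measure.pi μs) f S b ≥ 1 - ε := by
  classical
  refine ⟨200, by norm_num, ?_⟩
  intro ε hε hε1 cardR hR
  obtain ⟨k, L, hL, hk⟩ := exists_kL cardR hR hε hε1
  set N : ℝ := L * cardR * k + 1 with hN
  have hN0 : 0 < N := by positivity
  have hlogb : Filter.Tendsto (fun n : ℕ => Real.logb 2 (n:ℝ)) Filter.atTop Filter.atTop :=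
    (Real.tendsto_logb_atTop (by norm_num)).comp tendsto_natCast_atTop_atTop
  have hll : Filter.Tendsto (fun n : ℕ => Real.logb 2 (Real.logb 2 (n:ℝ))) Filter.atTop Filter.atTop :=
    (Real.tendsto_logb_atTop (by norm_num)).comp hlogb
  have hev : ∀ᶠ n : ℕ in Filter.atTop, 2 ≤ n ∧ 1 + 4 * N ≤ Real.logb 2 (Real.logb 2 (n:ℝ)) ∧
      2 ≤ Real.logb 2 (n:ℝ) := by
    filter_upwards [Filter.eventually_ge_atTop 2, hll.eventually_ge_atTop (1 + 4 * N),
      hlogb.eventually_ge_atTop 2] with n h1 h2 h3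
    exact ⟨h1, h2, h3⟩
  obtain ⟨n₀, hn₀⟩ := Filter.eventually_atTop.1 hev
  refine ⟨n₀, ?_⟩
  intro n hn R _ hcard μs hμ f m hm C hC
  obtain ⟨hn2, hLL, hl⟩ := hn₀ n hn
  set l := Real.logb 2 (n:ℝ) with hldef
  set ll := Real.logb 2 l with hlldef
  have hl0 : 0 < l := by linarith
  have hn0 : (0:ℝ) < n := by positivity
  have hRr : (2:ℝ) ≤ cardR := by exact_mod_cast hR
  obtain ⟨b, S, hS, hSb⟩ := combine (R := R) n hn2 (w := fun i a => (μs i {a}).toReal)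
    (fun i => by haveI := hμ i; exact isP_of (μs i)) (δ := 1 / l) (by positivity)
    (by rw [div_le_one hl0]; linarith) hε hε1 (by omega) k L (by rw [hcard]; exact hL) hk
    (B := N * (n / l)) (by positivity) (by
      rw [hcard]
      have : 1 / l * (n:ℝ) = n / l := by ring
      rw [this]
      apply mul_le_mul_of_nonneg_right _ (by positivity)
      rw [hN]; linarith) f
  refine ⟨b, S, ?_, ?_⟩
  · refine hS.trans ?_
    rw [hcard, one_div_one_div]
    have hln2 := Real.log_two_gt_d9
    have hln2' := Real.log_two_lt_d9
    have e1 : Real.log n = l * Real.log 2 := by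
      rw [hldef, Real.logb, div_mul_cancel₀ _ (by linarith)]
    have e2 : Real.log l = ll * Real.log 2 := by
      rw [hlldef, Real.logb, div_mul_cancel₀ _ (by linarith)]
    have hm1 : (cardR : ℝ) ≤ 2^m := by
      have h1 : Real.logb 2 (cardR:ℝ) ≤ m := by rw [hm]; exact Nat.le_ceil _
      rw [Real.logb_le_iff_le_rpow (by norm_num) (by linarith)] at h1
      simpa using h1
    have hmpos : (1:ℝ) ≤ m := by
      have : m ≠ 0 := by
        rintro rfl
        norm_num at hm1
        linarith
      exact_mod_cast Nat.one_le_iff_ne_zero.2 this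
    have hterm : 0 ≤ (m : ℝ)^3 * Real.logb 2 ((m : ℝ)/ε) / ε^2 := by
      have : 0 ≤ Real.logb 2 ((m : ℝ)/ε) := by
        apply Real.logb_nonneg (by norm_num)
        rw [le_div_iff₀ hε]; linarith
      positivity
    set q : ℝ := n / l with hq
    have hq0 : 0 < q := by positivity
    -- 1 ≤ q
    have hq1 : 1 ≤ q := by
      rw [hq, one_le_div hl0, hldef, Real.logb_le_iff_le_rpow (by norm_num) hn0]
      have : (n:ℝ) < 2^n := by exact_mod_cast Nat.lt_two_pow_self
      simpa using this.le
    have hll1 : 1 ≤ ll := by linarith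
    have e3 : ((cardR:ℝ) + 2/ε) / (Real.log n / (4 * (9 + 4 * Real.log l) * n))
        = ((cardR:ℝ) + 2/ε) * (4 * (9 + 4 * Real.log l) / Real.log 2) * q := by
      rw [e1, hq]; field_simp
    rw [e3]
    have hK : 4 * (9 + 4 * Real.log l) / Real.log 2 ≤ 80 * ll := by
      rw [div_le_iff₀ (by linarith), e2]
      have hp : 1 * Real.log 2 ≤ ll * Real.log 2 :=
        mul_le_mul_of_nonneg_right hll1 (by linarith)
      have e : 80 * ll * Real.log 2 = 80 * (ll * Real.log 2) := by ring
      rw [e]; linarith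
    set D : ℝ := 2^m + 1/ε with hD
    have hie : 2 ≤ 1/ε := by rw [le_div_iff₀ hε]; linarith
    have hD2 : 2 ≤ D := by linarith
    have hcD : (cardR:ℝ) + 2/ε ≤ 2 * D := by
      have : 2/ε = 2 * (1/ε) := by ring
      rw [hD, this]; linarith
    have hc0 : 0 ≤ (cardR:ℝ) + 2/ε := by positivity
    have h1 : ((cardR:ℝ) + 2/ε) * (4 * (9 + 4 * Real.log l) / Real.log 2) * q
        ≤ (2 * D) * (80 * ll) * q := by
      apply mul_le_mul_of_nonneg_right _ hq0.le
      apply mul_le_mul hcD hK _ (by linarith)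
      apply div_nonneg _ (by linarith)
      rw [e2]
      have hp : 0 ≤ ll * Real.log 2 := mul_nonneg (by linarith) (by linarith)
      linarith
    have h2 : C * n * ll / l = C * ll * q := by rw [hq]; ring
    rw [h2]
    have hCD : 200 * D ≤ C := by rw [hC, hD]; linarith
    have h3 : 200 * D * (ll * q) ≤ C * (ll * q) :=
      mul_le_mul_of_nonneg_right hCD (by positivity)
    have h4 : 4 * (N * q) ≤ ll * q := by
      rw [← mul_assoc]
      exact mul_le_mul_of_nonneg_right (by linarith) hq0.le
    have h5 : 1 ≤ ll * q := one_le_mul_of_one_le_of_one_le hll1 hq1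
    have h6 : 2 * (ll * q) ≤ D * (ll * q) := mul_le_mul_of_nonneg_right hD2 (by linarith)
    have e4 : (2 * D) * (80 * ll) * q = 160 * (D * (ll * q)) := by ring
    have e5 : C * ll * q = C * (ll * q) := by ring
    have e6 : 200 * D * (ll * q) = 200 * (D * (ll * q)) := by ring
    rw [e4] at h1
    rw [e6] at h3
    rw [e5]
    linarith
  · rw [infl_Ex μs hμ]
    exact hSb
end
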